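/- arXiv:1408.2559 — 2 statements merged into one kernel-verified Lean document; each statement's English description precedes it below -/
import Mathlib

section
/- For every ε > 0 there exists n₀ such that for all n ≥ n₀ and all integers k ≥ 3 and t ≥ 1 with t < k and n ≥ (t+1)(k−t+1) + η_{k,t}: the number of non-trivial t-intersecting k-uniform hypergraphs on [n] is at most ε·binom(n,t)·2^{binom(n−t,k−t)}, and the total number of t-intersecting k-uniform hypergraphs on [n] lies between (1−ε)·binom(n,t)·2^{binom(n−t,k−t)} and (1+ε)·binom(n,t)·2^{binom(n−t,k−t)}. -/
/-- A family of edges forms a `k`-uniform hypergraph on `[n]`. -/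
def IsKUniform (n k : ℕ) (H : Finset (Finset (Fin n))) : Prop :=
  ∀ e ∈ H, e.card = k

/-- A hypergraph is `t`-intersecting if any two of its edges share at least `t` vertices. -/
def IsTIntersectingHyp (n t : ℕ) (H : Finset (Finset (Fin n))) : Prop :=
  ∀ e ∈ H, ∀ f ∈ H, t ≤ (e ∩ f).card

/-- A `t`-intersecting hypergraph is trivial if some fixed `t`-set of vertices is
contained in all of its edges. -/
def IsTrivialHyp (n t : ℕ) (H : Finset (Finset (Fin n))) : Prop :=
  ∃ S : Finset (Fin n), S.card = t ∧ ∀ e ∈ H, S ⊆ e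

/-- The quantity `η_{k,t}` from the statement of the theorem. -/
noncomputable def eta (k t : ℕ) : ℝ :=
  if t = 1 then (k : ℝ) + 8 * Real.log k
  else if t = 2 ∧ 3 ≤ k - t then 12 * Real.log k
  else if 3 ≤ t ∧ 3 ≤ k - t then 1
  else if 2 ≤ t ∧ k - t = 2 then 31
  else 18 * (k : ℝ)


section

open Polynomial in
/-- The polynomial vanishing exactly on `A`. -/
noncomputable def setPoly {n : ℕ} (A : Finset (Fin n)) : ℚ[X] :=
  ∏ x ∈ A, (X - C (x.val : ℚ))

open Polynomial in
lemma setPoly_natDegree {n : ℕ} (A : Finset (Fin n)) : (setPoly A).natDegree = A.card := by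
  unfold setPoly
  rw [natDegree_prod_of_monic _ _ (fun _ _ => monic_X_sub_C _)]
  simp only [natDegree_X_sub_C, Finset.sum_const, smul_eq_mul, mul_one]

open Polynomial in
lemma setPoly_monic {n : ℕ} (A : Finset (Fin n)) : (setPoly A).Monic :=
  monic_prod_of_monic _ _ (fun _ _ => monic_X_sub_C _)

lemma setPoly_coprime {n : ℕ} {A B : Finset (Fin n)} (h : Disjoint A B) :
    IsCoprime (setPoly A) (setPoly B) := by
  unfold setPoly
  refine IsCoprime.prod_left fun x hx => IsCoprime.prod_right fun y hy => ?_
  apply Polynomial.isCoprime_X_sub_C_of_isUnit_sub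
  rw [isUnit_iff_ne_zero, sub_ne_zero]
  intro hxy
  have : x = y := by
    apply Fin.ext
    exact_mod_cast hxy
  subst this
  exact Finset.disjoint_left.mp h hx hy

lemma setPoly_split {n : ℕ} (A B : Finset (Fin n)) :
    setPoly A = setPoly (A ∩ B) * setPoly (A \ B) := by
  unfold setPoly
  rw [← Finset.prod_inter_mul_prod_sdiff A B]

open Polynomial in
/-- The polynomial with coefficients `c`. -/
noncomputable def coefPoly {s : ℕ} (c : Fin (s + 1) → ℚ) : ℚ[X] :=
  ∑ a, C (c a) * X ^ (a : ℕ)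

open Polynomial in
lemma coefPoly_coeff {s : ℕ} (c : Fin (s + 1) → ℚ) (a : Fin (s + 1)) :
    (coefPoly c).coeff a = c a := by
  unfold coefPoly
  simp only [finsetSum_coeff, coeff_C_mul, coeff_X_pow]
  rw [Finset.sum_eq_single a]
  · simp
  · intro b _ hb
    have : (a : ℕ) ≠ b := fun h => hb (Fin.ext h.symm)
    simp [this]
  · simp

lemma coefPoly_natDegree {s : ℕ} (c : Fin (s + 1) → ℚ) : (coefPoly c).natDegree ≤ s := by
  unfold coefPoly
  apply Polynomial.natDegree_sum_le_of_forall_le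
  intro i _
  refine (Polynomial.natDegree_C_mul_X_pow_le _ _).trans ?_
  omega

lemma coefPoly_eq {s : ℕ} (p : Polynomial ℚ) (h : p.natDegree ≤ s) :
    coefPoly (fun a : Fin (s + 1) => p.coeff a) = p := by
  unfold coefPoly
  rw [Fin.sum_univ_eq_sum_range (fun a => Polynomial.C (p.coeff a) * Polynomial.X ^ a) (s + 1)]
  exact (Polynomial.as_sum_range_C_mul_X_pow' p (by omega)).symm

/-- The linear functions used in the determinant. -/
noncomputable def colPoly {n : ℕ} (s : ℕ) (A B : Finset (Fin n)) :
    Fin (s + 1) ⊕ Fin (s + 1) → Polynomial ℚ :=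
  Sum.elim (fun a => setPoly A * Polynomial.X ^ (a : ℕ)) (fun a => setPoly B * Polynomial.X ^ (a : ℕ))

lemma sum_colPoly {n : ℕ} (s : ℕ) (A B : Finset (Fin n)) (c : Fin (s + 1) ⊕ Fin (s + 1) → ℚ) :
    ∑ x, Polynomial.C (c x) * colPoly s A B x =
      setPoly A * coefPoly (fun a => c (Sum.inl a)) +
      setPoly B * coefPoly (fun a => c (Sum.inr a)) := by
  rw [Fintype.sum_sum_type]
  unfold coefPoly colPoly
  rw [Finset.mul_sum, Finset.mul_sum]
  congr 1 <;> refine Finset.sum_congr rfl fun a _ => ?_ <;> simp <;> ring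

lemma colPoly_indep {n s t k : ℕ} (hk : k = t + s) (A B : Finset (Fin n)) (hA : A.card = k)
    (hB : B.card = k) (hAB : (A ∩ B).card < t) (c : Fin (s + 1) ⊕ Fin (s + 1) → ℚ)
    (h : ∑ x, Polynomial.C (c x) * colPoly s A B x = 0) : c = 0 := by
  rw [sum_colPoly] at h
  set q1 := coefPoly (fun a => c (Sum.inl a)) with hq1
  set q2 := coefPoly (fun a => c (Sum.inr a)) with hq2
  have d1 : q1.natDegree ≤ s := coefPoly_natDegree _
  have e1 := setPoly_split A B
  have e2 := setPoly_split B A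
  rw [Finset.inter_comm] at e2
  have hne : setPoly (A ∩ B) ≠ 0 := (setPoly_monic _).ne_zero
  have h2 : setPoly (A \ B) * q1 + setPoly (B \ A) * q2 = 0 := by
    apply mul_left_cancel₀ hne
    rw [e1, e2] at h
    linear_combination h
  have hcop : IsCoprime (setPoly (B \ A)) (setPoly (A \ B)) :=
    setPoly_coprime (by exact disjoint_sdiff_sdiff)
  have hdvd : setPoly (B \ A) ∣ q1 := by
    apply hcop.dvd_of_dvd_mul_left
    exact ⟨-q2, by linear_combination h2⟩
  have hcard : (B \ A).card ≥ s + 1 := by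
    have := Finset.card_inter_add_card_sdiff B A
    rw [Finset.inter_comm] at this
    omega
  have z1 : q1 = 0 := by
    by_contra hne1
    have := Polynomial.natDegree_le_of_dvd hdvd hne1
    rw [setPoly_natDegree] at this
    omega
  have z2 : q2 = 0 := by
    rw [z1, mul_zero, zero_add] at h2
    rcases mul_eq_zero.mp h2 with h3 | h3
    · exact absurd h3 (setPoly_monic _).ne_zero
    · exact h3
  ext x
  rcases x with a | a
  · have := coefPoly_coeff (fun a => c (Sum.inl a)) a
    rw [← hq1, z1] at this
    simpa using this.symm
  · have := coefPoly_coeff (fun a => c (Sum.inr a)) a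
    rw [← hq2, z2] at this
    simpa using this.symm

lemma colPoly_dep {n s t k : ℕ} (hk : k = t + s) (A B : Finset (Fin n)) (hA : A.card = k)
    (hB : B.card = k) (hAB : t ≤ (A ∩ B).card) :
    ∃ c : Fin (s + 1) ⊕ Fin (s + 1) → ℚ, c ≠ 0 ∧
      ∑ x, Polynomial.C (c x) * colPoly s A B x = 0 := by
  have c1 : (B \ A).card ≤ s := by
    have := Finset.card_inter_add_card_sdiff B A
    rw [Finset.inter_comm] at this
    omega
  have c2 : (A \ B).card ≤ s := by
    have := Finset.card_inter_add_card_sdiff A B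
    omega
  refine ⟨Sum.elim (fun a => (setPoly (B \ A)).coeff a) (fun a => (-setPoly (A \ B)).coeff a),
    ?_, ?_⟩
  · intro h
    have h1 : setPoly (B \ A) = 0 := by
      rw [← coefPoly_eq (s := s) (setPoly (B \ A)) (by rw [setPoly_natDegree]; exact c1)]
      have : (fun a : Fin (s + 1) => (setPoly (B \ A)).coeff a) = 0 := by
        ext a
        exact congrFun h (Sum.inl a)
      rw [this]
      simp [coefPoly]
    exact (setPoly_monic _).ne_zero h1
  · rw [sum_colPoly]
    simp only [Sum.elim_inl, Sum.elim_inr]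
    rw [coefPoly_eq _ (by rw [setPoly_natDegree]; exact c1),
      coefPoly_eq _ (by rw [Polynomial.natDegree_neg, setPoly_natDegree]; exact c2)]
    have e1 := setPoly_split A B
    have e2 := setPoly_split B A
    rw [Finset.inter_comm] at e2
    rw [e1, e2]
    ring

/-- independent polynomials: some evaluation matrix is invertible -/
lemma exists_eval_det_ne {ι : Type} [Fintype ι] [DecidableEq ι] (f : ι → Polynomial ℚ)
    (hf : ∀ c : ι → ℚ, ∑ x, Polynomial.C (c x) * f x = 0 → c = 0) :
    ∃ z : ι → ℚ, (Matrix.of fun x r => (f x).eval (z r)).det ≠ 0 := by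
  have hspan : Submodule.span ℚ (Set.range fun z : ℚ => (fun x => (f x).eval z)) = ⊤ := by
    by_contra hne
    obtain ⟨φ, hφ, hφ2⟩ := Submodule.exists_le_ker_of_lt_top _ (lt_top_iff_ne_top.mpr hne)
    apply hφ
    have hz : ∀ z : ℚ, φ (fun x => (f x).eval z) = 0 := fun z =>
      hφ2 (Submodule.subset_span ⟨z, rfl⟩)
    have hc := hf (fun x => φ (Pi.single x 1)) (by
      apply Polynomial.funext
      intro z
      rw [Polynomial.eval_finsetSum]
      have := hz z
      rw [LinearMap.pi_apply_eq_sum_univ φ] at this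
      simp only [smul_eq_mul] at this
      rw [Polynomial.eval_zero, ← this]
      refine Finset.sum_congr rfl fun x _ => ?_
      simp only [Polynomial.eval_mul, Polynomial.eval_C]
      rw [mul_comm]
      congr 2
      ext y; simp [Pi.single_apply, eq_comm])
    apply LinearMap.pi_ext
    intro x a
    have : Pi.single x a = a • (Pi.single x 1 : ι → ℚ) := by
      rw [← Pi.single_smul]; simp
    rw [this, map_smul, LinearMap.zero_apply]
    have := congrFun hc x
    rw [show φ (Pi.single x 1) = 0 from this]; simp
  obtain ⟨b, hb, hsp, hli⟩ := exists_linearIndependent ℚ (Set.range fun z : ℚ => (fun x => (f x).eval z))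
  rw [hspan] at hsp
  have B := Module.Basis.mk hli (by simp [hsp])
  have hB' : ∀ i, Module.Basis.mk hli (by simp [hsp]) i = i.1 := fun i => by simp
  let B := Module.Basis.mk hli (by simp [hsp])
  have : Fintype b := Module.Basis.fintypeIndexOfRankLtAleph0 B (by
    rw [rank_fun']; exact Cardinal.natCast_lt_aleph0) 
  have hcard : Fintype.card ι = Fintype.card b := by
    rw [← Module.finrank_eq_card_basis B]; simp
  let e : ι ≃ b := Fintype.equivOfCardEq hcard
  have hz : ∀ r : ι, ∃ z : ℚ, (fun x => (f x).eval z) = (e r).1 := fun r => hb (e r).2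
  choose z hz using hz
  refine ⟨z, ?_⟩
  have hli2 : LinearIndependent ℚ (fun r : ι => (e r).1) := hli.comp e e.injective
  have := (Matrix.linearIndependent_rows_iff_isUnit (A := Matrix.of fun r x => (f x).eval (z r))).mp (by
    convert hli2 using 1
    · ext r x
      exact congrFun (hz r) x
    · rfl)
  rw [Matrix.isUnit_iff_isUnit_det, isUnit_iff_ne_zero] at this
  rw [← Matrix.det_transpose]
  exact this

lemma exists_common_eval {ι κ : Type} [Fintype ι] [DecidableEq ι] [Fintype κ]
    (f : κ → ι → Polynomial ℚ)
    (hf : ∀ i, ∀ c : ι → ℚ, ∑ x, Polynomial.C (c x) * f i x = 0 → c = 0) :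
    ∃ z : ι → ℚ, ∀ i, (Matrix.of fun x r => (f i x).eval (z r)).det ≠ 0 := by
  let D : κ → MvPolynomial ι ℚ := fun i =>
    (Matrix.of fun x r => Polynomial.aeval (MvPolynomial.X r : MvPolynomial ι ℚ) (f i x)).det
  have hD : ∀ i z, MvPolynomial.eval z (D i) = (Matrix.of fun x r => (f i x).eval (z r)).det := by
    intro i z
    simp only [D]
    rw [RingHom.map_det]
    congr 1
    ext x r
    simp only [RingHom.mapMatrix_apply, Matrix.map_apply, Matrix.of_apply]
    rw [Polynomial.aeval_def, Polynomial.hom_eval₂]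
    rw [MvPolynomial.eval_X, Polynomial.eval]
    congr 1
    ext
    simp
  have hne : ∏ i, D i ≠ 0 := by
    rw [Finset.prod_ne_zero_iff]
    intro i _ h0
    obtain ⟨z, hz⟩ := exists_eval_det_ne (f i) (hf i)
    rw [← hD, h0] at hz
    simp at hz
  by_contra hcon
  push Not at hcon
  apply hne
  apply MvPolynomial.funext
  intro z
  rw [map_prod, map_zero]
  obtain ⟨i, hi⟩ := hcon z
  apply Finset.prod_eq_zero (Finset.mem_univ i)
  rw [hD, hi]

/-- `u ↦ det (u | w)` as an alternating map. -/
noncomputable def altDet (d : ℕ) (w : Fin d → (Fin d ⊕ Fin d → ℚ)) :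
    (Fin d ⊕ Fin d → ℚ) [⋀^Fin d]→ₗ[ℚ] ℚ where
  toFun u := Matrix.detRowAlternating (Sum.elim u w)
  map_update_add' u i x y := by
    have : ∀ (inst : DecidableEq (Fin d)) (a : Fin d ⊕ Fin d → ℚ), Sum.elim (@Function.update _ _ inst u i a) w
      = Function.update (Sum.elim u w) (Sum.inl i) a := by
        intro inst a
        rw [← Sum.elim_update_left]
    rw [this, this, this, AlternatingMap.map_update_add]
  map_update_smul' u i c x := by
    have : ∀ (inst : DecidableEq (Fin d)) (a : Fin d ⊕ Fin d → ℚ), Sum.elim (@Function.update _ _ inst u i a) w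
      = Function.update (Sum.elim u w) (Sum.inl i) a := by
        intro inst a
        rw [← Sum.elim_update_left]
    rw [this, this, AlternatingMap.map_update_smul]
  map_eq_zero_of_eq' u i j h hij := by
    apply AlternatingMap.map_eq_zero_of_eq _ _ (i := Sum.inl i) (j := Sum.inl j)
    · simpa using h
    · simpa using hij

/-- Füredi's threshold version of the Bollobás set pair inequality. -/
theorem set_pair {n s t k : ℕ} (hk : k = t + s) {κ : Type} [Fintype κ]
    (A B : κ → Finset (Fin n)) (hA : ∀ i, (A i).card = k) (hB : ∀ i, (B i).card = k)
    (h1 : ∀ i, (A i ∩ B i).card < t) (h2 : ∀ i j, i ≠ j → t ≤ (A i ∩ B j).card) :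
    Fintype.card κ ≤ (2 * s + 2).choose (s + 1) := by
  classical
  obtain ⟨z, hz⟩ := exists_common_eval (fun i => colPoly s (A i) (B i))
    (fun i c hc => colPoly_indep hk _ _ (hA i) (hB i) (h1 i) c hc)
  let u : κ → Fin (s + 1) → (Fin (s + 1) ⊕ Fin (s + 1) → ℚ) := fun i a r =>
    (setPoly (A i) * Polynomial.X ^ (a : ℕ)).eval (z r)
  let w : κ → Fin (s + 1) → (Fin (s + 1) ⊕ Fin (s + 1) → ℚ) := fun i a r =>
    (setPoly (B i) * Polynomial.X ^ (a : ℕ)).eval (z r)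
  have hM : ∀ i j, Sum.elim (u i) (w j) =
      (Matrix.of fun x r => (colPoly s (A i) (B j) x).eval (z r)) := by
    intro i j
    ext x r
    rcases x with a | a <;> simp [u, w, colPoly]
  have hd : ∀ i, altDet _ (w i) (u i) ≠ 0 := by
    intro i
    have := hz i
    rw [← hM] at this
    exact this
  have ho : ∀ i j, i ≠ j → altDet _ (w j) (u i) = 0 := by
    intro i j hij
    obtain ⟨c, hc, hc0⟩ := colPoly_dep hk _ _ (hA i) (hB j) (h2 i j hij)
    change Matrix.det (Sum.elim (u i) (w j)) = 0
    rw [hM]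
    apply Matrix.exists_vecMul_eq_zero_iff.mp
    refine ⟨c, hc, ?_⟩
    ext r
    have := congrArg (Polynomial.eval (z r)) hc0
    rw [Polynomial.eval_finsetSum] at this
    simpa [Matrix.vecMul, dotProduct] using this
  let x : κ → ⋀[ℚ]^(s + 1) (Fin (s + 1) ⊕ Fin (s + 1) → ℚ) := fun i =>
    exteriorPower.ιMulti ℚ (s + 1) (u i)
  let φ : κ → Module.Dual ℚ (⋀[ℚ]^(s + 1) (Fin (s + 1) ⊕ Fin (s + 1) → ℚ)) := fun i =>
    (altDet _ (w i) (u i))⁻¹ • exteriorPower.alternatingMapLinearEquiv (altDet _ (w i))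
  have hli : LinearIndependent ℚ x := by
    apply LinearIndependent.of_pairwise_dual_eq_zero_one x φ
    · intro i j hij
      simp [φ, x, ho j i hij.symm]
    · intro i
      simp [φ, x, inv_mul_cancel₀ (hd i)]
  have := hli.fintype_card_le_finrank
  rw [exteriorPower.finrank_eq] at this
  refine this.trans (le_of_eq ?_)
  simp
  congr 1
  ring

end

section
open Finset

/-- initial segment -/
def low (n m : ℕ) : Finset (Fin n) := univ.filter (fun x => x.val < m)

lemma mem_low {n m : ℕ} {x : Fin n} : x ∈ low n m ↔ x.val < m := by simp [low]

lemma card_low {n m : ℕ} (h : m ≤ n) : (low n m).card = m := by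
  unfold low
  rw [Fin.card_filter_val_lt]
  omega

/-- all `k`-supersets of `E` are in the family. -/
def Gen {n : ℕ} (k : ℕ) (F : Finset (Finset (Fin n))) (E : Finset (Fin n)) : Prop :=
  E.card ≤ k ∧ ∀ A : Finset (Fin n), A.card = k → E ⊆ A → A ∈ F

/-- stability under left shifts -/
def Shifted {n : ℕ} (F : Finset (Finset (Fin n))) : Prop :=
  ∀ e ∈ F, ∀ a b : Fin n, a < b → b ∈ e → a ∉ e → insert a (e.erase b) ∈ F

/-- non-trivial `t`-intersecting `k`-uniform families -/
def NT (n k t : ℕ) (F : Finset (Finset (Fin n))) : Prop :=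
  IsKUniform n k F ∧ IsTIntersectingHyp n t F ∧ ¬ IsTrivialHyp n t F

lemma count_between {n k : ℕ} (E D : Finset (Fin n)) (hED : Disjoint E D) (hE : E.card ≤ k) :
    ((powersetCard k (univ : Finset (Fin n))).filter (fun A => E ⊆ A ∧ Disjoint A D)).card =
      (n - E.card - D.card).choose (k - E.card) := by
  have h : ((powersetCard k (univ : Finset (Fin n))).filter (fun A => E ⊆ A ∧ Disjoint A D)) =
      (powersetCard (k - E.card) (univ \ (E ∪ D))).image (fun X => E ∪ X) := by
    ext A
    simp only [mem_filter, mem_powersetCard, mem_image, subset_univ, true_and]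
    constructor
    · rintro ⟨hA, hEA, hAD⟩
      refine ⟨A \ E, ⟨?_, ?_⟩, ?_⟩
      · intro x hx
        rw [mem_sdiff] at hx
        simp only [mem_sdiff, mem_univ, mem_union, true_and, not_or]
        exact ⟨hx.2, fun h => disjoint_left.mp hAD hx.1 h⟩
      · rw [card_sdiff_of_subset hEA, hA]
      · exact union_sdiff_of_subset hEA
    · rintro ⟨X, ⟨hX, hXc⟩, rfl⟩
      have hd : Disjoint E X := by
        rw [disjoint_left]
        intro x hx hx2
        have := hX hx2
        simp [hx] at this
      refine ⟨?_, subset_union_left, ?_⟩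
      · rw [card_union_of_disjoint hd, hXc]; omega
      · rw [disjoint_union_left]
        refine ⟨hED, ?_⟩
        rw [disjoint_left]
        intro x hx hx2
        have := hX hx
        simp [hx2] at this
  rw [h, card_image_of_injOn, card_powersetCard, card_sdiff_of_subset (subset_univ _),
    card_union_of_disjoint hED, card_univ, Fintype.card_fin, Nat.sub_sub]
  intro X hX Y hY hXY
  have key : ∀ Z : Finset (Fin n), Z ⊆ univ \ (E ∪ D) → (E ∪ Z) \ E = Z := by
    intro Z hZ
    ext x
    simp only [mem_sdiff, mem_union]
    constructor
    · rintro ⟨h | h, h2⟩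
      · exact absurd h h2
      · exact h
    · intro h
      have := hZ h
      simp only [mem_sdiff, mem_union, not_or] at this
      exact ⟨Or.inr h, this.2.1⟩
  rw [← key X (mem_powersetCard.mp hX).1, ← key Y (mem_powersetCard.mp hY).1]
  exact congrArg (· \ E) hXY

lemma count_trace {n k m : ℕ} (hm : m ≤ n) (E : Finset (Fin n)) (hE : E ⊆ low n m)
    (hEk : E.card ≤ k) :
    ((powersetCard k (univ : Finset (Fin n))).filter (fun A => A ∩ low n m = E)).card =
      (n - m).choose (k - E.card) := by
  have := count_between (k := k) E (low n m \ E) disjoint_sdiff hEk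
  rw [card_sdiff_of_subset hE, card_low hm] at this
  have hc : E.card ≤ m := by
    have := card_le_card hE
    rwa [card_low hm] at this
  rw [show n - E.card - (m - E.card) = n - m by omega] at this
  rw [← this]
  congr 1
  apply filter_congr
  intro A _
  constructor
  · rintro rfl
    refine ⟨inter_subset_left, ?_⟩
    rw [disjoint_left]
    intro x hx hx2
    simp only [mem_sdiff, mem_inter, not_and] at hx2
    exact hx2.2 hx hx2.1
  · rintro ⟨h1, h2⟩
    ext x
    rw [mem_inter]
    constructor
    · rintro ⟨h3, h4⟩
      by_contra h5
      exact disjoint_left.mp h2 h3 (mem_sdiff.mpr ⟨h4, h5⟩)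
    · intro h
      exact ⟨h1 h, hE h⟩

lemma exists_ext {n k t : ℕ} (hkn : k ≤ n) (hn : 2 * k + 1 ≤ n + t) : ∀ (d : ℕ) (E1 E2 : Finset (Fin n)),
    E1.card ≤ k → E2.card ≤ k → (E1 ∩ E2).card < t → 2 * k - E1.card - E2.card = d →
    ∃ A B : Finset (Fin n), E1 ⊆ A ∧ E2 ⊆ B ∧ A.card = k ∧ B.card = k ∧ (A ∩ B).card < t := by
  intro d
  induction d with
  | zero =>
    intro E1 E2 h1 h2 h3 h4
    exact ⟨E1, E2, Subset.rfl, Subset.rfl, by omega, by omega, h3⟩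
  | succ d ih =>
    intro E1 E2 h1 h2 h3 h4
    by_cases hu : E1 ∪ E2 = univ
    · have hcard : (E1 ∪ E2).card = n := by rw [hu]; simp
      have := card_union_add_card_inter E1 E2
      obtain ⟨A, hA, hA2⟩ := exists_superset_card_eq h1 (by simpa using hkn)
      obtain ⟨B, hB, hB2⟩ := exists_superset_card_eq h2 (by simpa using hkn)
      refine ⟨A, B, hA, hB, hA2, hB2, ?_⟩
      have h5 := card_union_add_card_inter A B
      have h6 : A ∪ B = univ := by
        apply eq_univ_of_forall
        intro x
        have : x ∈ E1 ∪ E2 := by rw [hu]; simp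
        rw [mem_union] at this ⊢
        exact this.imp (fun h => hA h) (fun h => hB h)
      rw [h6, card_univ, Fintype.card_fin] at h5
      omega
    · have : ∃ x, x ∉ E1 ∪ E2 := by
        by_contra hc
        push Not at hc
        exact hu (eq_univ_of_forall hc)
      obtain ⟨x, hx⟩ := this
      rw [mem_union, not_or] at hx
      rcases Nat.lt_or_ge E1.card k with h5 | h5
      · have hc := card_insert_of_notMem hx.1
        obtain ⟨A, B, a1, a2, a3⟩ := ih (insert x E1) E2 (by omega) h2
          (by rw [insert_inter_of_notMem hx.2]; exact h3) (by omega)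
        exact ⟨A, B, (subset_insert _ _).trans a1, a2, a3⟩
      · have hc := card_insert_of_notMem hx.2
        obtain ⟨A, B, a1, a2, a3⟩ := ih E1 (insert x E2) h1 (by omega)
          (by rw [inter_insert_of_notMem hx.1]; exact h3) (by omega)
        exact ⟨A, B, a1, (subset_insert _ _).trans a2, a3⟩

section
variable {n k t : ℕ} {F : Finset (Finset (Fin n))}

lemma gen_inter (hkn : k ≤ n) (hn : 2 * k + 1 ≤ n + t) (hI : IsTIntersectingHyp n t F) {E1 E2 : Finset (Fin n)}
    (h1 : Gen k F E1) (h2 : Gen k F E2) : t ≤ (E1 ∩ E2).card := by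
  by_contra hc
  push Not at hc
  obtain ⟨A, B, a1, a2, a3, a4, a5⟩ := exists_ext hkn hn _ E1 E2 h1.1 h2.1 hc rfl
  have := hI A (h1.2 A a3 a1) B (h2.2 B a4 a2)
  omega

lemma gen_up {E E' : Finset (Fin n)} (h : Gen k F E) (hs : E ⊆ E') (hc : E'.card ≤ k) :
    Gen k F E' :=
  ⟨hc, fun A hA hEA => h.2 A hA (hs.trans hEA)⟩

lemma card_swap {e : Finset (Fin n)} {a b : Fin n} (hb : b ∈ e) (ha : a ∉ e) :
    (insert a (e.erase b)).card = e.card := by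
  rw [card_insert_of_notMem (fun h => ha (mem_of_mem_erase h)), card_erase_of_mem hb]
  have : 0 < e.card := card_pos.mpr ⟨b, hb⟩
  omega

lemma gen_shift (hS : Shifted F) {E : Finset (Fin n)} (h : Gen k F E) {a b : Fin n} (hab : a < b)
    (hb : b ∈ E) (ha : a ∉ E) : Gen k F (insert a (E.erase b)) := by
  refine ⟨by rw [card_swap hb ha]; exact h.1, ?_⟩
  intro A hA hEA
  have haA : a ∈ A := hEA (mem_insert_self _ _)
  have hsub : ∀ x ∈ E, x ≠ b → x ∈ A := fun x hx hxb =>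
    hEA (mem_insert_of_mem (mem_erase.mpr ⟨hxb, hx⟩))
  by_cases hbA : b ∈ A
  · apply h.2 A hA
    intro x hx
    by_cases hxb : x = b
    · rw [hxb]; exact hbA
    · exact hsub x hx hxb
  · have h1 : insert b (A.erase a) ∈ F := by
      apply h.2
      · rw [card_swap haA hbA, hA]
      · intro x hx
        by_cases hxb : x = b
        · rw [hxb]; exact mem_insert_self _ _
        · refine mem_insert_of_mem (mem_erase.mpr ⟨?_, hsub x hx hxb⟩)
          rintro rfl
          exact ha hx
    have h2 := hS _ h1 a b hab (mem_insert_self _ _) (by simp [hab.ne])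
    have h3 : insert a ((insert b (A.erase a)).erase b) = A := by
      rw [erase_insert (fun h => hbA (mem_of_mem_erase h)), insert_erase haA]
    rwa [h3] at h2

/-- Critical traces. -/
def Crit (k : ℕ) (F : Finset (Finset (Fin n))) (p : Fin n) (E : Finset (Fin n)) : Prop :=
  E ⊆ low n (p.val + 1) ∧ p ∈ E ∧ Gen k F E ∧ ¬ Gen k F (E.erase p)

lemma low_inter_erase (p : Fin n) (A : Finset (Fin n)) :
    (A ∩ low n (p.val + 1)).erase p = A ∩ low n p.val := by
  ext x
  simp only [mem_erase, mem_inter, mem_low]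
  constructor
  · rintro ⟨h1, h2, h3⟩
    have : x.val ≠ p.val := fun h => h1 (Fin.ext h)
    exact ⟨h2, by omega⟩
  · rintro ⟨h2, h3⟩
    refine ⟨?_, h2, by omega⟩
    rintro rfl
    omega

lemma exchange (hkn : k ≤ n) (hn : 2 * k + 1 ≤ n + t) (hU : IsKUniform n k F)
    (hI : IsTIntersectingHyp n t F) (htn : t ≤ n)
    (hS : Shifted F) (hmax : ∀ F', NT n k t F' → F'.card ≤ F.card) (p : Fin n)
    (hdet : ∀ A ∈ F, Gen k F (A ∩ low n (p.val + 1)))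
    (A0 : Finset (Fin n)) (hA0 : A0 ∈ F) (hG0 : Gen k F (A0 ∩ low n p.val)) (hA0t : ¬ low n t ⊆ A0)
    (Q R : Finset (Finset (Fin n))) (i j : ℕ) (hQ : ∀ E ∈ Q, Crit k F p E ∧ E.card = i)
    (hR : ∀ E ∈ R, Crit k F p E ∧ E.card = j) (hQR : Disjoint Q R)
    (hInter : ∀ E1 ∈ Q, ∀ E2, Crit k F p E2 → E2 ∉ R → t + 1 ≤ (E1 ∩ E2).card) :
    Q.card * (n - (p.val + 1)).choose (k + 1 - i) ≤
      R.card * (n - (p.val + 1)).choose (k - j) := by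
  classical
  set m := p.val + 1 with hm
  have hmn : m ≤ n := p.isLt
  set K := F.filter (fun A => A ∩ low n m ∉ R) with hK
  set N := (powersetCard k (univ : Finset (Fin n))).filter
    (fun A => A ∩ low n m ∈ Q.image (fun E => E.erase p)) with hN
  -- new sets
  have hdisj : Disjoint K N := by
    rw [disjoint_left]
    intro A hA hA2
    simp only [hK, hN, mem_filter, mem_image] at hA hA2
    obtain ⟨E, hE, hE2⟩ := hA2.2
    have := hdet A hA.1
    rw [← hE2] at this
    exact (hQ E hE).1.2.2.2 this
  have key : ∀ A ∈ N, ∀ B ∈ K, t ≤ (A ∩ B).card := by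
    intro A hA B hB
    simp only [hK, hN, mem_filter, mem_image] at hA hB
    obtain ⟨E, hE, hE2⟩ := hA.2
    have gB := hdet B hB.1
    have gE := (hQ E hE).1.2.2.1
    have hle : ((E.erase p) ∩ (B ∩ low n m)).card ≤ (A ∩ B).card := by
      apply card_le_card
      rw [hE2]
      intro x hx
      simp only [mem_inter] at hx ⊢
      exact ⟨hx.1.1, hx.2.1⟩
    refine le_trans ?_ hle
    by_cases hpB : p ∈ B
    · by_cases hcr : Gen k F ((B ∩ low n m).erase p)
      · have := gen_inter hkn hn hI gE hcr
        rw [inter_erase] at this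
        rw [erase_inter]
        exact this
      · have hc : Crit k F p (B ∩ low n m) :=
          ⟨inter_subset_right, mem_inter.mpr ⟨hpB, mem_low.mpr (by omega)⟩, gB, hcr⟩
        have := hInter E hE _ hc hB.2
        rw [erase_inter]
        have h2 := pred_card_le_card_erase (s := E ∩ (B ∩ low n m)) (a := p)
        omega
    · have := gen_inter hkn hn hI gE gB
      rw [erase_inter, erase_eq_of_notMem]
      · exact this
      · simp [hpB]
  have key2 : ∀ A ∈ N, ∀ B ∈ N, t ≤ (A ∩ B).card := by
    intro A hA B hB
    simp only [hN, mem_filter, mem_image] at hA hB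
    obtain ⟨E, hE, hE2⟩ := hA.2
    obtain ⟨E', hE', hE2'⟩ := hB.2
    have hle : ((E.erase p) ∩ (E'.erase p)).card ≤ (A ∩ B).card := by
      apply card_le_card
      rw [hE2, hE2']
      intro x hx
      simp only [mem_inter] at hx ⊢
      exact ⟨hx.1.1, hx.2.1⟩
    refine le_trans ?_ hle
    have := hInter E hE E' (hQ E' hE').1 (disjoint_left.mp hQR hE')
    have h2 := pred_card_le_card_erase (s := E ∩ E') (a := p)
    have h3 : E.erase p ∩ E'.erase p = (E ∩ E').erase p := by
      ext x; simp only [mem_inter, mem_erase]; tauto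
    rw [h3]
    omega
  have hNT : NT n k t (K ∪ N) := by
    refine ⟨?_, ?_, ?_⟩
    · intro e he
      rcases mem_union.mp he with he | he
      · exact hU e (mem_filter.mp he).1
      · exact (mem_powersetCard.mp (mem_filter.mp he).1).2
    · intro e he f hf
      rcases mem_union.mp he with he | he <;> rcases mem_union.mp hf with hf | hf
      · exact hI e (mem_filter.mp he).1 f (mem_filter.mp hf).1
      · rw [inter_comm]; exact key f hf e he
      · exact key e he f hf
      · exact key2 e he f hf
    · rintro ⟨T, hT, hTs⟩
      -- members of F with Gen low trace
      have hF0 : ∀ A ∈ F, Gen k F (A ∩ low n p.val) → T ⊆ A := by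
        intro A hA hG
        apply hTs A
        apply mem_union_left
        refine mem_filter.mpr ⟨hA, ?_⟩
        intro hAR
        have := (hR _ hAR).1.2.2.2
        rw [hm, low_inter_erase] at this
        exact this hG
      apply hA0t
      intro c hc
      by_cases hcT : c ∈ T
      · exact hF0 A0 hA0 hG0 hcT
      · have : ∃ a ∈ T, a ∉ low n t := by
          by_contra hcon
          push Not at hcon
          have : T = low n t := eq_of_subset_of_card_le hcon (by rw [card_low htn, hT])
          exact hcT (this ▸ hc)
        obtain ⟨a, haT, ha⟩ := this
        rw [mem_low] at ha hc
        have hca : c < a := by rw [Fin.lt_def]; omega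
        by_contra hcA
        have haA := hF0 A0 hA0 hG0 haT
        have h1 := hS A0 hA0 c a hca haA hcA
        have h2 : Gen k F (insert c (A0.erase a) ∩ low n p.val) := by
          by_cases hap : a.val < p.val
          · have hcp : c.val < p.val := by rw [Fin.lt_def] at hca; omega
            have := gen_shift hS hG0 hca (mem_inter.mpr ⟨haA, mem_low.mpr hap⟩)
              (fun h => hcA (mem_inter.mp h).1)
            convert this using 1
            rw [insert_inter_of_mem (mem_low.mpr hcp), erase_inter]
          · refine gen_up hG0 ?_ ?_
            · intro x hx
              rw [mem_inter] at hx ⊢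
              refine ⟨mem_insert_of_mem (mem_erase.mpr ⟨?_, hx.1⟩), hx.2⟩
              rintro rfl
              exact hap (mem_low.mp hx.2)
            · refine (card_le_card inter_subset_left).trans ?_
              rw [card_swap haA hcA, hU A0 hA0]
        have h3 := hF0 _ h1 h2 haT
        rw [mem_insert, mem_erase] at h3
        rcases h3 with h3 | h3
        · exact hca.ne h3.symm
        · exact h3.1 rfl
  have hle := hmax _ hNT
  rw [card_union_of_disjoint hdisj] at hle
  have hFs : (F.filter (fun A => A ∩ low n m ∈ R)).card + K.card = F.card :=
    card_filter_add_card_filter_not _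
  have hRc : (F.filter (fun A => A ∩ low n m ∈ R)).card ≤ R.card * (n - m).choose (k - j) := by
    rw [card_eq_sum_card_fiberwise (f := fun A => A ∩ low n m) (t := R)
      (fun A hA => mem_coe.mpr (mem_filter.mp (mem_coe.mp hA)).2)]
    rw [← smul_eq_mul]
    apply sum_le_card_nsmul
    intro E hE
    have hc := (hR E hE)
    rw [← hc.2, ← count_trace hmn E hc.1.1 hc.1.2.2.1.1]
    apply card_le_card
    intro A hA
    simp only [mem_filter] at hA ⊢
    exact ⟨mem_powersetCard.mpr ⟨subset_univ _, hU A hA.1.1⟩, hA.2⟩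
  have hNc : N.card = Q.card * (n - m).choose (k + 1 - i) := by
    rw [card_eq_sum_card_fiberwise (f := fun A => A ∩ low n m) (t := Q.image (fun E => E.erase p))
      (fun A hA => mem_coe.mpr (mem_filter.mp (mem_coe.mp hA)).2)]
    have hinj : (Q.image (fun E => E.erase p)).card = Q.card := by
      apply card_image_of_injOn
      intro E hE E' hE' h
      have := congrArg (insert p) h
      simp only at this
      rwa [insert_erase (hQ E hE).1.2.1, insert_erase (hQ E' hE').1.2.1] at this
    rw [← hinj, ← smul_eq_mul]
    apply sum_const_nat
    intro E hE
    obtain ⟨E', hE', rfl⟩ := mem_image.mp hE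
    have hc := (hQ E' hE')
    have hce := card_erase_of_mem hc.1.2.1
    have hpos : 0 < E'.card := card_pos.mpr ⟨p, hc.1.2.1⟩
    have hk := hc.1.2.2.1.1
    have hct := count_trace (k := k) hmn (E'.erase p) ((erase_subset _ _).trans hc.1.1) (by omega)
    rw [show k + 1 - i = k - (E'.erase p).card by omega, ← hct]
    congr 1
    ext A
    simp only [hN, mem_filter]
    constructor
    · rintro ⟨⟨h1, h2⟩, h3⟩
      exact ⟨h1, h3⟩
    · rintro ⟨h1, h3⟩
      exact ⟨⟨h1, h3 ▸ hE⟩, h3⟩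
  rw [← hNc]
  omega
end

end

section
open Finset

section
variable {n k t s : ℕ} {F : Finset (Finset (Fin n))}

lemma gen_self (hU : IsKUniform n k F) {A : Finset (Fin n)} (hA : A ∈ F) : Gen k F A := by
  refine ⟨(hU A hA).le, fun B hB hAB => ?_⟩
  rw [← eq_of_subset_of_card_le hAB (by rw [hB, hU A hA])]
  exact hA

lemma crit_cross (hkn : k ≤ n) (hn : 2 * k + 1 ≤ n + t) (hI : IsTIntersectingHyp n t F)
    (hS : Shifted F) (p : Fin n) {E1 E2 : Finset (Fin n)} (h1 : Crit k F p E1)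
    (h2 : Crit k F p E2) (hne : E1.card + E2.card ≠ p.val + 1 + t) : t + 1 ≤ (E1 ∩ E2).card := by
  have h3 := gen_inter hkn hn hI h1.2.2.1 h2.2.2.1
  by_contra hc
  have h4 : (E1 ∩ E2).card = t := by omega
  have h5 := card_union_add_card_inter E1 E2
  have hsub : E1 ∪ E2 ⊆ low n (p.val + 1) := union_subset h1.1 h2.1
  have hcl : (low n (p.val + 1)).card = p.val + 1 := card_low p.isLt
  have h6 : ∃ l ∈ low n (p.val + 1), l ∉ E1 ∪ E2 := by
    by_contra hcon
    push Not at hcon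
    have : E1 ∪ E2 = low n (p.val + 1) := Subset.antisymm hsub hcon
    rw [this, hcl] at h5
    omega
  obtain ⟨l, hl, hl2⟩ := h6
  rw [mem_union, not_or] at hl2
  have hlp : l < p := by
    rw [mem_low] at hl
    have : l ≠ p := fun h => hl2.1 (h ▸ h1.2.1)
    have : l.val ≠ p.val := fun h => this (Fin.ext h)
    rw [Fin.lt_def]; omega
  have h7 := gen_inter hkn hn hI (gen_shift hS h1.2.2.1 hlp h1.2.1 hl2.1) h2.2.2.1
  rw [insert_inter_of_notMem hl2.2, erase_inter, card_erase_of_mem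
    (mem_inter.mpr ⟨h1.2.1, h2.2.1⟩)] at h7
  have : 0 < (E1 ∩ E2).card := card_pos.mpr ⟨p, mem_inter.mpr ⟨h1.2.1, h2.2.1⟩⟩
  omega

lemma exists_good_crit (hU : IsKUniform n k F) (hS : Shifted F) (p : Fin n)
    (hdet : ∀ A ∈ F, Gen k F (A ∩ low n (p.val + 1)))
    (A1 : Finset (Fin n)) (hA1 : A1 ∈ F) (hG1 : ¬ Gen k F (A1 ∩ low n p.val)) :
    ∃ E, Crit k F p E ∧ k + 1 - E.card ≤ n - (p.val + 1) := by
  set E := A1 ∩ low n (p.val + 1) with hE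
  have hEe : E.erase p = A1 ∩ low n p.val := low_inter_erase p A1
  have gE : Gen k F E := hdet A1 hA1
  have hpE : p ∈ E := by
    by_contra hp
    rw [← hEe, erase_eq_of_notMem hp] at hG1
    exact hG1 gE
  have hEc := card_erase_of_mem hpE
  have hEpos : 0 < E.card := card_pos.mpr ⟨p, hpE⟩
  have hEk := gE.1
  rw [← hEe] at hG1
  have : ∃ B : Finset (Fin n), B.card = k ∧ E.erase p ⊆ B ∧ B ∉ F := by
    by_contra hcon
    push Not at hcon
    exact hG1 ⟨by omega, hcon⟩
  obtain ⟨B, hB, hEB, hBF⟩ := this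
  have hpB : p ∉ B := by
    intro hp
    apply hBF
    apply gE.2 B hB
    intro x hx
    by_cases hxp : x = p
    · rw [hxp]; exact hp
    · exact hEB (mem_erase.mpr ⟨hxp, hx⟩)
  have hBlow : (B ∩ low n p.val).card < k := by
    by_contra hcon
    push Not at hcon
    have hBl : B ∩ low n p.val = B := eq_of_subset_of_card_le inter_subset_left (by omega)
    have : ∃ x ∈ B, x ∉ E.erase p := by
      by_contra hcon2
      push Not at hcon2
      have := card_le_card (s := B) (t := E.erase p) hcon2
      omega
    obtain ⟨x, hxB, hxE⟩ := this
    have hxp : x < p := by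
      rw [← hBl, mem_inter, mem_low] at hxB
      exact hxB.2
    have h1 : insert p (B.erase x) ∈ F := by
      apply gE.2
      · rw [card_swap hxB hpB, hB]
      · intro y hy
        by_cases hyp : y = p
        · rw [hyp]; exact mem_insert_self _ _
        · have hy2 := mem_erase.mpr ⟨hyp, hy⟩
          refine mem_insert_of_mem (mem_erase.mpr ⟨?_, hEB hy2⟩)
          rintro rfl
          exact hxE hy2
    have h2 := hS _ h1 x p hxp (mem_insert_self _ _) (by simp [hxp.ne])
    rw [erase_insert (fun h => hpB (mem_of_mem_erase h)), insert_erase hxB] at h2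
    exact hBF h2
  have hpn : p ∉ B ∩ low n p.val := fun h => hpB (mem_inter.mp h).1
  have hc := card_insert_of_notMem hpn
  have hEsub : E ⊆ insert p (B ∩ low n p.val) := by
    intro x hx
    by_cases hxp : x = p
    · rw [hxp]; exact mem_insert_self _ _
    · have hx2 := mem_erase.mpr ⟨hxp, hx⟩
      refine mem_insert_of_mem (mem_inter.mpr ⟨hEB hx2, ?_⟩)
      rw [hEe] at hx2
      exact (mem_inter.mp hx2).2
  refine ⟨insert p (B ∩ low n p.val), ⟨?_, mem_insert_self _ _, gen_up gE hEsub (by omega), ?_⟩, ?_⟩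
  · intro x hx
    rw [mem_insert, mem_inter, mem_low] at hx
    rw [mem_low]
    rcases hx with rfl | hx
    · omega
    · omega
  · rw [erase_insert hpn]
    intro hG
    exact hBF (hG.2 B hB inter_subset_left)
  · rw [hc]
    have h1 := card_inter_add_card_sdiff B (low n p.val)
    have h2 : B \ low n p.val ⊆ univ \ low n (p.val + 1) := by
      intro x hx
      rw [mem_sdiff, mem_low] at hx
      rw [mem_sdiff, mem_low]
      refine ⟨mem_univ _, ?_⟩
      have : x.val ≠ p.val := by
        intro h
        exact hpB ((Fin.ext h : x = p) ▸ hx.1)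
      omega
    have h3 := card_le_card h2
    rw [card_sdiff_of_subset (subset_univ _), card_univ, Fintype.card_fin, card_low p.isLt] at h3
    omega

lemma choose_contra {N x y a b : ℕ} (hN : x + y + 1 < N) (ha : 0 < a) (hb : 0 < b)
    (h1 : a * N.choose (x + 1) ≤ b * N.choose y) (h2 : b * N.choose (y + 1) ≤ a * N.choose x) :
    False := by
  have px : 0 < N.choose x := Nat.choose_pos (by omega)
  have py : 0 < N.choose y := Nat.choose_pos (by omega)
  have ex := Nat.choose_succ_right_eq N x
  have ey := Nat.choose_succ_right_eq N y
  obtain ⟨u, hu⟩ : ∃ u, N - x = y + 2 + u := ⟨N - x - (y + 2), by omega⟩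
  obtain ⟨v, hv⟩ : ∃ v, N - y = x + 2 + v := ⟨N - y - (x + 2), by omega⟩
  rw [hu] at ex
  rw [hv] at ey
  have h3 := Nat.mul_le_mul h1 h2
  have h4 : N.choose (x + 1) * N.choose (y + 1) ≤ N.choose x * N.choose y := by
    apply Nat.le_of_mul_le_mul_left _ (Nat.mul_pos ha hb)
    calc a * b * (N.choose (x + 1) * N.choose (y + 1))
        = a * N.choose (x + 1) * (b * N.choose (y + 1)) := by ring
      _ ≤ _ := h3
      _ = _ := by ring
  have h5 : (N.choose (x + 1) * N.choose (y + 1)) * ((x + 1) * (y + 1)) =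
      (N.choose x * N.choose y) * ((y + 2 + u) * (x + 2 + v)) := by
    calc _ = (N.choose (x + 1) * (x + 1)) * (N.choose (y + 1) * (y + 1)) := by ring
      _ = _ := by rw [ex, ey]; ring
  have h6 : (N.choose x * N.choose y) * ((x + 1) * (y + 1)) <
      (N.choose x * N.choose y) * ((y + 2 + u) * (x + 2 + v)) := by
    apply Nat.mul_lt_mul_of_pos_left _ (Nat.mul_pos px py)
    nlinarith
  have h7 := Nat.mul_le_mul_right ((x + 1) * (y + 1)) h4
  omega

lemma mid_arith {r' t' x w : ℕ} (h10 : (r' + 1) * w ≤ (t' + (r' + 1)) * (x + 1))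
    (hnn : (t' + 1 + 1) * (r' + 1 + x + 1) + 1 ≤ w + x + (t' + 1 + 2 * (r' + 1))) : False := by
  have h1 : t' * (r' + x + 1) + x + 2 ≤ w := by nlinarith
  have h2 := (Nat.mul_le_mul_left (r' + 1) h1).trans h10
  have h3 : 0 ≤ t' * (r' * (r' + x + 1) + r') := Nat.zero_le _
  have h4 : (r' + 1) * (t' * (r' + x + 1) + x + 2) =
    (t' + (r' + 1)) * (x + 1) + t' * (r' * (r' + x + 1) + r') + r' + 1 := by ring
  omega

set_option maxHeartbeats 1000000 in
lemma ak_contra (hk : k = t + s) (ht : 1 ≤ t) (hs : 1 ≤ s) (hnn : (t + 1) * (s + 1) + 1 ≤ n)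
    (hNT : NT n k t F) (hS : Shifted F) (hmax : ∀ F', NT n k t F' → F'.card ≤ F.card) (p : Fin n)
    (hdet : ∀ A ∈ F, Gen k F (A ∩ low n (p.val + 1)))
    (A1 : Finset (Fin n)) (hA1 : A1 ∈ F) (hG1 : ¬ Gen k F (A1 ∩ low n p.val))
    (A0 : Finset (Fin n)) (hA0 : A0 ∈ F) (hG0 : Gen k F (A0 ∩ low n p.val))
    (hA0t : ¬ low n t ⊆ A0) : False := by
  classical
  obtain ⟨hU, hI, hT⟩ := hNT
  have hts : s ≤ t * s := Nat.le_mul_of_pos_left s ht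
  have hn2 : 2 * k + 2 ≤ n + t := by nlinarith
  have hn : 2 * k + 1 ≤ n + t := by omega
  have hkn : k ≤ n := by nlinarith
  have htn : t ≤ n := by omega
  have hpn := p.isLt
  obtain ⟨E, hE, hEN⟩ := exists_good_crit hU hS p hdet A1 hA1 hG1
  let U : ℕ → Finset (Finset (Fin n)) := fun i => univ.filter (fun E => Crit k F p E ∧ E.card = i)
  have hUm : ∀ i E, E ∈ U i ↔ Crit k F p E ∧ E.card = i := by
    intro i E; simp [U]
  have ex := exchange hkn hn hU hI htn hS hmax p hdet A0 hA0 hG0 hA0t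
  obtain ⟨i, hi⟩ : ∃ i, E.card = i := ⟨_, rfl⟩
  have hit : t ≤ i := by
    have := gen_inter hkn hn hI hE.2.2.1 hE.2.2.1
    rwa [inter_self, hi] at this
  have hik : i ≤ k := hi ▸ hE.2.2.1.1
  have him : i ≤ p.val + 1 := by
    have := card_le_card hE.1
    rwa [card_low hpn, hi] at this
  have hEU : E ∈ U i := (hUm _ _).mpr ⟨hE, hi⟩
  have ha : 0 < (U i).card := card_pos.mpr ⟨E, hEU⟩
  rw [hi] at hEN
  by_cases hij : i + i = p.val + 1 + t
  · -- middle case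
    have hti : t < i := by
      by_contra hc
      have hie : i = t := by omega
      apply hT
      refine ⟨E, by omega, fun A hA => ?_⟩
      have := gen_inter hkn hn hI hE.2.2.1 (gen_self hU hA)
      have h2 : E ∩ A = E := eq_of_subset_of_card_le inter_subset_left (by omega)
      rw [← h2]; exact inter_subset_right
    obtain ⟨r, hr⟩ : ∃ r, i = t + r := ⟨i - t, by omega⟩
    have hpv : p.val = t + 2 * r - 1 := by omega
    -- pigeonhole
    have hcl : (low n p.val).card = p.val := card_low hpn.le
    have hpig : ∃ l ∈ low n p.val, r * (U i).card ≤
        p.val * ((U i).filter (fun E => l ∉ E)).card := by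
      by_contra hcon
      push Not at hcon
      have hne : (low n p.val).Nonempty := card_pos.mp (by omega)
      have h1 := sum_lt_sum_of_nonempty hne hcon
      rw [← mul_sum, sum_const, hcl, smul_eq_mul] at h1
      have h2 : ∑ l ∈ low n p.val, ((U i).filter (fun E => l ∉ E)).card = r * (U i).card := by
        simp_rw [card_filter]
        rw [sum_comm]
        have : ∀ E ∈ U i, (∑ l ∈ low n p.val, if l ∉ E then 1 else 0) = r := by
          intro E hE
          rw [hUm] at hE
          rw [← card_filter]
          have h3 : (low n p.val).filter (fun l => l ∉ E) = low n (p.val + 1) \ E := by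
            ext l
            simp only [mem_filter, mem_sdiff, mem_low]
            constructor
            · rintro ⟨h1, h2⟩; exact ⟨by omega, h2⟩
            · rintro ⟨h1, h2⟩
              refine ⟨?_, h2⟩
              have : l.val ≠ p.val := fun h => h2 ((Fin.ext h : l = p) ▸ hE.1.2.1)
              omega
          rw [h3, card_sdiff_of_subset hE.1.1, card_low hpn, hE.2]
          omega
        rw [sum_congr rfl this, sum_const, smul_eq_mul, mul_comm]
      rw [h2] at h1
      exact lt_irrefl _ h1
    obtain ⟨l, hl, hpig⟩ := hpig
    rw [mem_low] at hl
    have hex := ex ((U i).filter (fun E => l ∉ E)) ((U i).filter (fun E => ¬ l ∉ E)) i i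
      (fun E hE => (hUm _ _).mp (mem_filter.mp hE).1)
      (fun E hE => (hUm _ _).mp (mem_filter.mp hE).1)
      (disjoint_filter_filter_not _ _ _) (by
        intro E1 hE1 E2 hE2 hE2R
        rw [mem_filter, hUm] at hE1
        by_cases h2i : E2.card = i
        · have hl2 : l ∉ E2 := by
            intro h
            exact hE2R (mem_filter.mpr ⟨(hUm _ _).mpr ⟨hE2, h2i⟩, by simpa using h⟩)
          have h5 := card_union_add_card_inter E1 E2
          have h6 : E1 ∪ E2 ⊆ (low n (p.val + 1)).erase l := by
            intro x hx
            refine mem_erase.mpr ⟨?_, union_subset hE1.1.1.1 hE2.1 hx⟩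
            rintro rfl
            rcases mem_union.mp hx with hx | hx
            · exact hE1.2 hx
            · exact hl2 hx
          have h7 := card_le_card h6
          rw [card_erase_of_mem (mem_low.mpr (by omega)), card_low hpn] at h7
          omega
        · exact crit_cross hkn hn hI hS p hE1.1.1 hE2 (by omega))
    have hsum := card_filter_add_card_filter_not (s := U i) (fun E => l ∉ E)
    set q := ((U i).filter (fun E => l ∉ E)).card
    set q' := ((U i).filter (fun E => ¬ l ∉ E)).card
    set a := (U i).card
    obtain ⟨x, hx⟩ : ∃ x, k = i + x := ⟨k - i, by omega⟩
    rw [show k + 1 - i = x + 1 by omega, show k - i = x by omega] at hex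
    have hss : s = r + x := by omega
    set N := n - (p.val + 1) with hN
    have hNx : N = n - (t + 2 * r) := by omega
    have h3 := Nat.choose_succ_right_eq N x
    have hq' : p.val * q' ≤ (t + r - 1) * a := by
      have : p.val * q + p.val * q' = p.val * a := by rw [← mul_add, hsum]
      have h4 : p.val * a = r * a + (t + r - 1) * a := by rw [← add_mul]; congr 1; omega
      omega
    have h8 : r * a * N.choose (x + 1) ≤ (t + r - 1) * a * N.choose x :=
      calc r * a * N.choose (x + 1) ≤ p.val * q * N.choose (x + 1) := Nat.mul_le_mul_right _ hpig
        _ = p.val * (q * N.choose (x + 1)) := by ring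
        _ ≤ p.val * (q' * N.choose x) := Nat.mul_le_mul_left _ hex
        _ = p.val * q' * N.choose x := by ring
        _ ≤ _ := Nat.mul_le_mul_right _ hq'
    have pc : 0 < N.choose x := Nat.choose_pos (by omega)
    have h9 : (a * N.choose x) * (r * (N - x)) ≤ (a * N.choose x) * ((t + r - 1) * (x + 1)) := by
      calc (a * N.choose x) * (r * (N - x)) = r * a * (N.choose (x + 1) * (x + 1)) := by
            rw [h3]; ring
        _ = r * a * N.choose (x + 1) * (x + 1) := by ring
        _ ≤ (t + r - 1) * a * N.choose x * (x + 1) := Nat.mul_le_mul_right _ h8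
        _ = _ := by ring
    have h10 := Nat.le_of_mul_le_mul_left h9 (Nat.mul_pos ha pc)
    obtain ⟨t', rfl⟩ : ∃ t', t = t' + 1 := ⟨t - 1, by omega⟩
    obtain ⟨r', hr'⟩ : ∃ r', r = r' + 1 := ⟨r - 1, by omega⟩
    obtain ⟨w, hw⟩ : ∃ w, N - x = w := ⟨_, rfl⟩
    have hwn : n = w + x + (t' + 1 + 2 * r) := by omega
    rw [hw, show t' + 1 + r - 1 = t' + r by omega] at h10
    rw [hwn, hss] at hnn
    subst hr'
    exact mid_arith h10 hnn
  · obtain ⟨j, hj⟩ : ∃ j, i + j = p.val + 1 + t := ⟨p.val + 1 + t - i, by omega⟩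
    have hne : i ≠ j := fun h => hij (by omega)
    have hdis : ∀ i j, i ≠ j → Disjoint (U i) (U j) := by
      intro i j hne
      rw [disjoint_left]
      intro E h1 h2
      rw [hUm] at h1 h2
      exact hne (h1.2.symm.trans h2.2)
    have gen : ∀ i j, i + j = p.val + 1 + t → i ≠ j → (U i).card * (n - (p.val + 1)).choose (k + 1 - i) ≤
        (U j).card * (n - (p.val + 1)).choose (k - j) := by
      intro i j hij hne
      apply ex (U i) (U j) i j (fun E hE => (hUm _ _).mp hE) (fun E hE => (hUm _ _).mp hE)
        (hdis i j hne)
      intro E1 hE1 E2 hE2 hE2R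
      rw [hUm] at hE1
      apply crit_cross hkn hn hI hS p hE1.1 hE2
      intro h
      exact hE2R ((hUm _ _).mpr ⟨hE2, by omega⟩)
    have g1 := gen i j hj hne
    have g2 := gen j i (by omega) hne.symm
    rcases Nat.eq_zero_or_pos (U j).card with hb | hb
    · rw [hb, zero_mul] at g1
      have : 0 < (n - (p.val + 1)).choose (k + 1 - i) := Nat.choose_pos hEN
      have := Nat.mul_pos ha this
      omega
    · obtain ⟨E', hE'⟩ := card_pos.mp hb
      rw [hUm] at hE'
      have hjk : j ≤ k := hE'.2 ▸ hE'.1.2.2.1.1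
      rw [show k + 1 - i = (k - i) + 1 by omega] at g1
      rw [show k + 1 - j = (k - j) + 1 by omega] at g2
      exact choose_contra (by omega) ha hb g1 g2
end

end

section
open Finset

section
variable {n k t s : ℕ} {F : Finset (Finset (Fin n))}

lemma struct1 (hkn : k + 1 ≤ n) (hn : 2 * k + 1 ≤ n + t) (hI : IsTIntersectingHyp n t F)
    (htn : t ≤ n) (hS : Shifted F) (p : Fin n)
    (hdet : ∀ A ∈ F, Gen k F (A ∩ low n (p.val + 1)))
    (hno : ∀ A ∈ F, Gen k F (A ∩ low n p.val) → low n t ⊆ A)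
    (A : Finset (Fin n)) (hA : A ∈ F) (hAt : ¬ low n t ⊆ A) :
    ∃ y : Fin n, y.val < t ∧ t ≤ p.val ∧ A ∩ low n (p.val + 1) = (low n (p.val + 1)).erase y := by
  classical
  obtain ⟨y, hyt, hyA⟩ := not_subset.mp hAt
  have hpn := p.isLt
  set E := A ∩ low n (p.val + 1) with hE
  have hEe : E.erase p = A ∩ low n p.val := low_inter_erase p A
  have gE : Gen k F E := hdet A hA
  have hyE : y ∉ E := fun h => hyA (mem_inter.mp h).1
  have hpE : p ∈ E := by
    by_contra hp
    rw [erase_eq_of_notMem hp] at hEe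
    rw [hEe] at gE
    exact hAt (hno A hA gE)
  have claim : ∀ c : Fin n, c < p → c ∉ E → t ≤ p.val ∧ y = c := by
    intro c hcp hcE
    have gE' := gen_shift hS gE hcp hpE hcE
    set E' := insert c (E.erase p) with hE'
    have hsub : E' ⊆ low n p.val := by
      rw [hE', hEe]
      intro x hx
      rw [mem_insert] at hx
      rcases hx with rfl | hx
      · exact mem_low.mpr hcp
      · exact (mem_inter.mp hx).2
    have hlt : low n t ⊆ E' := by
      intro z hz
      by_contra hzE
      obtain ⟨B, hB1, hB2, hB3⟩ := exists_subsuperset_card_eq (s := E') (t := univ.erase z) (n := k)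
        (fun x hx => mem_erase.mpr ⟨fun h => hzE (h ▸ hx), mem_univ _⟩) gE'.1
        (by rw [card_erase_of_mem (mem_univ _), card_univ, Fintype.card_fin]; omega)
      have hBF := gE'.2 B hB3 hB1
      have hg := gen_up gE' (subset_inter hB1 hsub)
        ((card_le_card inter_subset_left).trans hB3.le)
      have := hB2 (hno B hBF hg hz)
      exact (mem_erase.mp this).1 rfl
    constructor
    · have := card_le_card (hlt.trans hsub)
      rwa [card_low htn, card_low hpn.le] at this
    · have := hlt hyt
      rw [hE', mem_insert] at this
      rcases this with h | h
      · exact h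
      · exact absurd (mem_of_mem_erase h) hyE
  have hex : ∃ c : Fin n, c < p ∧ c ∉ E := by
    by_contra hcon
    push Not at hcon
    have h1 : E = low n (p.val + 1) := by
      apply Subset.antisymm inter_subset_right
      intro x hx
      rw [mem_low] at hx
      rcases Nat.lt_or_ge x.val p.val with h | h
      · exact hcon x h
      · rwa [show x = p from Fin.ext (by omega)]
    have h2 := gen_inter (by omega) hn hI gE gE
    rw [inter_self, h1, card_low hpn] at h2
    apply hyE
    rw [h1, mem_low]
    rw [mem_low] at hyt
    omega
  obtain ⟨c, hc, hcE⟩ := hex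
  refine ⟨y, mem_low.mp hyt, (claim c hc hcE).1, ?_⟩
  ext x
  rw [mem_erase]
  constructor
  · intro hx
    exact ⟨fun h => hyE (h ▸ hx), (mem_inter.mp hx).2⟩
  · rintro ⟨hxy, hx⟩
    by_contra hxE
    rw [mem_low] at hx
    have hxp : x.val ≠ p.val := fun h => hxE ((Fin.ext h : x = p) ▸ hpE)
    exact hxy (claim x (by rw [Fin.lt_def]; omega) hxE).2.symm

theorem ak_structure (hk : k = t + s) (ht : 1 ≤ t) (hs : 1 ≤ s) (hnn : (t + 1) * (s + 1) + 1 ≤ n)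
    (hNT : NT n k t F) (hS : Shifted F) (hmax : ∀ F', NT n k t F' → F'.card ≤ F.card) :
    ∃ m, t + 2 ≤ m ∧ m ≤ k + 1 ∧
      F.card + (n - m).choose s ≤ (n - t).choose s + t * (n - m).choose (k + 1 - m) := by
  classical
  have hts : s ≤ t * s := Nat.le_mul_of_pos_left s ht
  have hn : 2 * k + 1 ≤ n + t := by nlinarith
  have hkn : k + 1 ≤ n := by nlinarith
  have htn : t ≤ n := by omega
  have hNT' := hNT
  obtain ⟨hU, hI, hT⟩ := hNT
  have hex : ∃ m, ∀ A ∈ F, Gen k F (A ∩ low n m) := by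
    refine ⟨n, fun A hA => ?_⟩
    have : A ∩ low n n = A := by
      apply inter_eq_left.mpr
      intro x _
      exact mem_low.mpr x.isLt
    rw [this]
    exact gen_self hU hA
  have hnt : ∃ A1 ∈ F, ¬ low n t ⊆ A1 := by
    by_contra hcon
    push Not at hcon
    exact hT ⟨low n t, card_low htn, hcon⟩
  obtain ⟨A1, hA1, hA1t⟩ := hnt
  obtain ⟨p, hdet, hndet⟩ : ∃ p : Fin n, (∀ A ∈ F, Gen k F (A ∩ low n (p.val + 1))) ∧
      ¬ ∀ A ∈ F, Gen k F (A ∩ low n p.val) := by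
    have h0 : Nat.find hex ≠ 0 := by
      intro h0
      have := Nat.find_spec hex A1 hA1
      rw [h0] at this
      have h1 := gen_inter (by omega) hn hI this this
      have : A1 ∩ low n 0 = ∅ := by
        ext x; simp [mem_low]
      rw [this] at h1
      simp at h1
      omega
    have hle : Nat.find hex ≤ n := by
      apply Nat.find_min'
      intro A hA
      have : A ∩ low n n = A := by
        apply inter_eq_left.mpr
        intro x _
        exact mem_low.mpr x.isLt
      rw [this]
      exact gen_self hU hA
    refine ⟨⟨Nat.find hex - 1, by omega⟩, ?_, ?_⟩
    · have := Nat.find_spec hex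
      simp only
      rwa [show Nat.find hex - 1 + 1 = Nat.find hex by omega]
    · exact Nat.find_min hex (by simp only; omega)
  push Not at hndet
  obtain ⟨A2, hA2, hG2⟩ := hndet
  have hno : ∀ A ∈ F, Gen k F (A ∩ low n p.val) → low n t ⊆ A := by
    intro A hA hG
    by_contra hc
    exact ak_contra hk ht hs hnn hNT' hS hmax p hdet A2 hA2 hG2 A hA hG hc
  have hst := struct1 hkn hn hI htn hS p hdet hno
  obtain ⟨y1, hy1, htp, hE1⟩ := hst A1 hA1 hA1t
  have hpn := p.isLt
  have hg1 := hdet A1 hA1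
  rw [hE1] at hg1
  obtain ⟨m, hm⟩ : ∃ m, p.val + 1 = m := ⟨_, rfl⟩
  rw [hm] at hg1 hdet hst
  have hmn : m ≤ n := by omega
  have hce : ∀ y : Fin n, y.val < t → ((low n m).erase y).card = m - 1 := by
    intro y hy
    rw [card_erase_of_mem (mem_low.mpr (by omega)), card_low hmn]
  have hmk : m - 1 ≤ k := by rw [← hce y1 hy1]; exact hg1.1
  have hG : ∀ A ∈ F, t ≤ ((low n m).erase y1 ∩ A).card := fun A hA =>
    gen_inter (by omega) hn hI hg1 (gen_self hU hA)
  have hm2 : m ≠ t + 1 := by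
    intro h
    apply hT
    refine ⟨(low n m).erase y1, by rw [hce y1 hy1]; omega, fun A hA => ?_⟩
    have h1 := hG A hA
    have h2 := hce y1 hy1
    have := eq_of_subset_of_card_le (inter_subset_left : (low n m).erase y1 ∩ A ⊆ _) (by omega)
    rw [← this]
    exact inter_subset_right
  refine ⟨m, by omega, by omega, ?_⟩
  set F1 := F.filter (fun A => low n t ⊆ A) with hF1
  set F2 := F.filter (fun A => ¬ low n t ⊆ A) with hF2
  have hsum : F1.card + F2.card = F.card := card_filter_add_card_filter_not _
  have hltm : low n t ⊆ low n m := by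
    intro x hx
    rw [mem_low] at hx ⊢
    omega
  have hX := count_between (k := k) (low n t) ∅ (disjoint_empty_right _) (by rw [card_low htn]; omega)
  have hY := count_between (k := k) (low n t) (low n m \ low n t) disjoint_sdiff
    (by rw [card_low htn]; omega)
  rw [card_sdiff_of_subset hltm] at hY
  simp only [card_low htn, card_low hmn, card_empty, disjoint_empty_right, and_true] at hX hY
  rw [show n - t - (m - t) = n - m by omega, show k - t = s by omega] at hY
  rw [show n - t - 0 = n - t by omega, show k - t = s by omega] at hX
  set X := (powersetCard k (univ : Finset (Fin n))).filter (fun A => low n t ⊆ A)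
  set Y := (powersetCard k (univ : Finset (Fin n))).filter
    (fun A => low n t ⊆ A ∧ Disjoint A (low n m \ low n t))
  have h1 : F1.card + Y.card ≤ X.card := by
    rw [← card_union_of_disjoint]
    · apply card_le_card
      apply union_subset
      · intro A hA
        rw [mem_filter] at hA
        exact mem_filter.mpr ⟨mem_powersetCard.mpr ⟨subset_univ _, hU A hA.1⟩, hA.2⟩
      · intro A hA
        rw [mem_filter] at hA
        exact mem_filter.mpr ⟨hA.1, hA.2.1⟩
    · rw [disjoint_left]
      intro A hA hA2
      rw [mem_filter] at hA hA2
      have h3 := hG A hA.1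
      have h4 : (low n m).erase y1 ∩ A ⊆ (low n t).erase y1 := by
        intro x hx
        rw [mem_inter, mem_erase] at hx
        rw [mem_erase]
        refine ⟨hx.1.1, ?_⟩
        by_contra hc
        exact disjoint_left.mp hA2.2.2 hx.2 (mem_sdiff.mpr ⟨hx.1.2, hc⟩)
      have h5 := card_le_card h4
      rw [card_erase_of_mem (mem_low.mpr hy1), card_low htn] at h5
      omega
  have h2 : F2.card ≤ t * (n - m).choose (k + 1 - m) := by
    have hsub : F2 ⊆ (low n t).biUnion (fun y => (powersetCard k (univ : Finset (Fin n))).filter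
        (fun A => A ∩ low n m = (low n m).erase y)) := by
      intro A hA
      rw [mem_filter] at hA
      obtain ⟨y, hy, _, hE⟩ := hst A hA.1 hA.2
      rw [mem_biUnion]
      exact ⟨y, mem_low.mpr hy, mem_filter.mpr ⟨mem_powersetCard.mpr ⟨subset_univ _, hU A hA.1⟩, hE⟩⟩
    refine (card_le_card hsub).trans ?_
    have := card_biUnion_le_card_mul (low n t) (fun y => (powersetCard k (univ : Finset (Fin n))).filter
        (fun A => A ∩ low n m = (low n m).erase y)) ((n - m).choose (k + 1 - m)) (by
      intro y hy
      rw [mem_low] at hy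
      have h3 := count_trace (k := k) hmn ((low n m).erase y) (erase_subset _ _)
        (by rw [hce y hy]; omega)
      rw [h3, hce y hy]
      rw [show k - (m - 1) = k + 1 - m by omega])
    rwa [card_low htn] at this
  omega
end

end

section
open Finset

section
variable {n k t s : ℕ} {F : Finset (Finset (Fin n))}

open Classical in
/-- the shift of a single edge relative to a family -/
noncomputable def shf (a b : Fin n) (F : Finset (Finset (Fin n))) (e : Finset (Fin n)) :
    Finset (Fin n) :=
  if b ∈ e ∧ a ∉ e ∧ insert a (e.erase b) ∉ F then insert a (e.erase b) else e

/-- the shifted family -/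
noncomputable def shF (a b : Fin n) (F : Finset (Finset (Fin n))) : Finset (Finset (Fin n)) :=
  F.image (shf a b F)

lemma shf_cases (a b : Fin n) (F : Finset (Finset (Fin n))) (e : Finset (Fin n)) :
    (b ∈ e ∧ a ∉ e ∧ insert a (e.erase b) ∉ F ∧ shf a b F e = insert a (e.erase b)) ∨
    ((b ∈ e → a ∉ e → insert a (e.erase b) ∈ F) ∧ shf a b F e = e) := by
  unfold shf
  by_cases h : b ∈ e ∧ a ∉ e ∧ insert a (e.erase b) ∉ F
  · left; rw [if_pos h]; exact ⟨h.1, h.2.1, h.2.2, rfl⟩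
  · right; rw [if_neg h]
    refine ⟨fun h1 h2 => ?_, rfl⟩
    by_contra h3
    exact h ⟨h1, h2, h3⟩

lemma swap_swap {a b : Fin n} {e : Finset (Fin n)} (hb : b ∈ e) (ha : a ∉ e) :
    insert b ((insert a (e.erase b)).erase a) = e := by
  rw [erase_insert (fun h => ha (mem_of_mem_erase h)), insert_erase hb]

lemma shf_inj (a b : Fin n) (F : Finset (Finset (Fin n))) : Set.InjOn (shf a b F) (F : Set _) := by
  intro e he f hf h
  rw [mem_coe] at he hf
  rcases shf_cases a b F e with ⟨h1, h2, h3, h4⟩ | ⟨h1, h4⟩ <;>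
  rcases shf_cases a b F f with ⟨g1, g2, g3, g4⟩ | ⟨g1, g4⟩ <;> rw [h4, g4] at h
  · rw [← swap_swap h1 h2, h, swap_swap g1 g2]
  · exact absurd (h ▸ hf) h3
  · exact absurd (h ▸ he) g3
  · exact h

lemma shF_card (a b : Fin n) : (shF a b F).card = F.card := card_image_of_injOn (shf_inj a b F)

lemma shF_uniform (a b : Fin n) (hU : IsKUniform n k F) : IsKUniform n k (shF a b F) := by
  intro e he
  obtain ⟨f, hf, rfl⟩ := mem_image.mp he
  rcases shf_cases a b F f with ⟨h1, h2, h3, h4⟩ | ⟨h1, h4⟩ <;> rw [h4]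
  · rw [card_swap h1 h2, hU f hf]
  · exact hU f hf

lemma shF_tint (a b : Fin n) (hI : IsTIntersectingHyp n t F) :
    IsTIntersectingHyp n t (shF a b F) := by
  have key : ∀ e ∈ F, ∀ f ∈ F, b ∈ e → a ∉ e → (b ∈ f → a ∉ f → insert a (f.erase b) ∈ F) →
      t ≤ (insert a (e.erase b) ∩ f).card := by
    intro e he f hf hb ha hf2
    by_cases hbf : b ∈ f
    · by_cases haf : a ∈ f
      · rw [insert_inter_of_mem haf, erase_inter, card_swap (mem_inter.mpr ⟨hb, hbf⟩)
          (fun h => ha (mem_inter.mp h).1)]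
        exact hI e he f hf
      · have := hI e he _ (hf2 hbf haf)
        rw [inter_insert_of_notMem ha, inter_erase] at this
        rw [insert_inter_of_notMem haf, erase_inter]
        exact this
    · refine (hI e he f hf).trans (card_le_card ?_)
      intro x hx
      rw [mem_inter] at hx ⊢
      refine ⟨mem_insert_of_mem (mem_erase.mpr ⟨?_, hx.1⟩), hx.2⟩
      rintro rfl
      exact hbf hx.2
  intro e0 he0 f0 hf0
  obtain ⟨e, he, rfl⟩ := mem_image.mp he0
  obtain ⟨f, hf, rfl⟩ := mem_image.mp hf0
  rcases shf_cases a b F e with ⟨h1, h2, h3, h4⟩ | ⟨h1, h4⟩ <;>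
  rcases shf_cases a b F f with ⟨g1, g2, g3, g4⟩ | ⟨g1, g4⟩ <;> rw [h4, g4]
  · rw [insert_inter_of_mem (mem_insert_self _ _), inter_insert_of_notMem, inter_erase, erase_inter,
      erase_idem, card_swap (mem_inter.mpr ⟨h1, g1⟩) (fun h => h2 (mem_inter.mp h).1)]
    · exact hI e he f hf
    · exact fun h => h2 (mem_of_mem_erase h)
  · exact key e he f hf h1 h2 g1
  · rw [inter_comm]; exact key f hf e he g1 g2 h1
  · exact hI e he f hf

/-- weight of an edge -/
def wt (e : Finset (Fin n)) : ℕ := ∑ x ∈ e, x.val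

/-- weight of a family -/
def Wt (F : Finset (Finset (Fin n))) : ℕ := ∑ e ∈ F, wt e

lemma wt_swap {a b : Fin n} (hab : a < b) {e : Finset (Fin n)} (hb : b ∈ e) (ha : a ∉ e) :
    wt (insert a (e.erase b)) < wt e := by
  unfold wt
  rw [sum_insert (fun h => ha (mem_of_mem_erase h)), ← add_sum_erase e _ hb]
  rw [Fin.lt_def] at hab
  omega

lemma Wt_shF {a b : Fin n} (hab : a < b) {e : Finset (Fin n)} (he : e ∈ F) (hb : b ∈ e)
    (ha : a ∉ e) (hne : insert a (e.erase b) ∉ F) : Wt (shF a b F) < Wt F := by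
  unfold Wt shF
  rw [sum_image (shf_inj a b F)]
  apply sum_lt_sum
  · intro f _
    rcases shf_cases a b F f with ⟨h1, h2, h3, h4⟩ | ⟨h1, h4⟩ <;> rw [h4]
    exact (wt_swap hab h1 h2).le
  · refine ⟨e, he, ?_⟩
    rcases shf_cases a b F e with ⟨h1, h2, h3, h4⟩ | ⟨h1, h4⟩
    · rw [h4]; exact wt_swap hab h1 h2
    · exact absurd (h1 hb ha) hne

lemma exists_min_fam (P : Finset (Finset (Fin n)) → Prop) (h : ∃ F, P F) :
    ∃ F, P F ∧ ∀ a b : Fin n, a < b → P (shF a b F) →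
      ∀ e ∈ F, b ∈ e → a ∉ e → insert a (e.erase b) ∈ F := by
  classical
  obtain ⟨F0, hF0⟩ := h
  obtain ⟨F, hF, hmin⟩ := exists_min_image (univ.filter P) Wt ⟨F0, by simpa using hF0⟩
  refine ⟨F, (mem_filter.mp hF).2, fun a b hab hP e he hb ha => ?_⟩
  by_contra hne
  have := hmin _ (mem_filter.mpr ⟨mem_univ _, hP⟩)
  have := Wt_shF hab he hb ha hne
  omega

/-- `s + 2` sets inside a `k+1` set give non-triviality -/
lemma nontriv_of_many (hk : k = t + s) (hkn : k + 1 ≤ n) (hU : IsKUniform n k F)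
    (h : s + 2 ≤ (F.filter (fun e => e ⊆ low n (k + 1))).card) : ¬ IsTrivialHyp n t F := by
  classical
  rintro ⟨T, hT, hTF⟩
  have hsub : F.filter (fun e => e ⊆ low n (k + 1)) ⊆
      (low n (k + 1) \ T).image (fun x => (low n (k + 1)).erase x) := by
    intro e he
    rw [mem_filter] at he
    have hc := card_sdiff_of_subset he.2
    rw [card_low hkn, hU e he.1, show k + 1 - k = 1 by omega, card_eq_one] at hc
    obtain ⟨x, hx⟩ := hc
    have hx1 : x ∈ low n (k + 1) \ e := by rw [hx]; exact mem_singleton_self _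
    rw [mem_sdiff] at hx1
    rw [mem_image]
    refine ⟨x, mem_sdiff.mpr ⟨hx1.1, fun h => hx1.2 (hTF e he.1 h)⟩, ?_⟩
    rw [← sdiff_singleton_eq_erase, ← hx, Finset.sdiff_sdiff_eq_self he.2]
  have h1 := (card_le_card hsub).trans card_image_le
  have : ∃ e ∈ F, e ⊆ low n (k + 1) := by
    have : 0 < (F.filter (fun e => e ⊆ low n (k + 1))).card := by omega
    obtain ⟨e, he⟩ := card_pos.mp this
    exact ⟨e, (mem_filter.mp he).1, (mem_filter.mp he).2⟩
  obtain ⟨e, he, hel⟩ := this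
  rw [card_sdiff_of_subset ((hTF e he).trans hel), card_low hkn, hT] at h1
  omega

lemma stage3 (hk : k = t + s) (hkn : k + 1 ≤ n) (hU : IsKUniform n k F)
    (hI : IsTIntersectingHyp n t F)
    (h : s + 2 ≤ (F.filter (fun e => e ⊆ low n (k + 1))).card) :
    ∃ F', NT n k t F' ∧ F'.card = F.card ∧ Shifted F' := by
  classical
  obtain ⟨G, ⟨hG1, hG2, hG3, hG4⟩, hst⟩ := exists_min_fam
    (fun G => IsKUniform n k G ∧ IsTIntersectingHyp n t G ∧ G.card = F.card ∧
      s + 2 ≤ (G.filter (fun e => e ⊆ low n (k + 1))).card) ⟨F, hU, hI, rfl, h⟩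
  refine ⟨G, ⟨hG1, hG2, nontriv_of_many hk hkn hG1 hG4⟩, hG3, ?_⟩
  intro e he a b hab hb ha
  refine hst a b hab ⟨shF_uniform a b hG1, shF_tint a b hG2, by rw [shF_card, hG3], ?_⟩ e he hb ha
  refine hG4.trans ?_
  rw [← card_image_of_injOn (s := G.filter (fun e => e ⊆ low n (k + 1))) (f := shf a b G)
    ((shf_inj a b G).mono (by intro x hx; exact (mem_filter.mp hx).1))]
  apply card_le_card
  intro f hf
  obtain ⟨g, hg, rfl⟩ := mem_image.mp hf
  rw [mem_filter] at hg
  refine mem_filter.mpr ⟨mem_image_of_mem _ hg.1, ?_⟩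
  rcases shf_cases a b G g with ⟨h1, h2, h3, h4⟩ | ⟨h1, h4⟩ <;> rw [h4]
  · intro x hx
    rw [mem_insert] at hx
    rcases hx with rfl | hx
    · have := hg.2 h1
      rw [mem_low] at this ⊢
      rw [Fin.lt_def] at hab
      omega
    · exact hg.2 (mem_of_mem_erase hx)
  · exact hg.2

/-- special families -/
def Spec (n t : ℕ) (a b : Fin n) (F : Finset (Finset (Fin n))) : Prop :=
  ∀ e ∈ F, (low n (t + 1)).erase a ⊆ e ∨ (low n (t + 1)).erase b ⊆ e

lemma spec_triv (htn : t + 1 ≤ n) {a b : Fin n} (hb : b.val < t + 1)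
    (hsp : Spec n t a b F) (h : ∀ e ∈ F, a ∈ e) : IsTrivialHyp n t F := by
  classical
  refine ⟨(low n (t + 1)).erase b, by rw [card_erase_of_mem (mem_low.mpr hb), card_low htn]; rfl, ?_⟩
  intro e he
  rcases hsp e he with h1 | h1
  · intro x hx
    by_cases hxa : x = a
    · rw [hxa]; exact h e he
    · exact h1 (mem_erase.mpr ⟨hxa, mem_of_mem_erase hx⟩)
  · exact h1

lemma spec_comm {a b : Fin n} (h : Spec n t a b F) : Spec n t b a F :=
  fun e he => (h e he).symm

lemma spec_full (htn : t + 1 ≤ n) {a b : Fin n} (ha : a.val < t + 1)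
    (hb : b.val < t + 1) (hNT : NT n k t F) (hsp : Spec n t a b F)
    (hmax : ∀ F', NT n k t F' → F'.card ≤ F.card) :
    ∀ A : Finset (Fin n), A.card = k → low n (t + 1) ⊆ A → A ∈ F := by
  classical
  intro A hA hlA
  by_contra hAF
  have hc := card_insert_of_notMem hAF
  have hce : ∀ x : Fin n, x.val < t + 1 → ((low n (t + 1)).erase x).card = t := by
    intro x hx
    rw [card_erase_of_mem (mem_low.mpr hx), card_low htn]; rfl
  have key : ∀ e ∈ F, t ≤ (A ∩ e).card := by
    intro e he
    rcases hsp e he with h | h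
    · rw [← hce a ha]
      exact card_le_card (subset_inter ((erase_subset _ _).trans hlA) h)
    · rw [← hce b hb]
      exact card_le_card (subset_inter ((erase_subset _ _).trans hlA) h)
  have : NT n k t (insert A F) := by
    refine ⟨?_, ?_, ?_⟩
    · intro e he
      rcases mem_insert.mp he with rfl | he
      · exact hA
      · exact hNT.1 e he
    · intro e he0 f hf0
      rcases mem_insert.mp he0 with rfl | he <;> rcases mem_insert.mp hf0 with rfl | hf
      · rw [inter_self]
        have := card_le_card hlA
        rw [card_low htn] at this
        omega
      · exact key f hf
      · rw [inter_comm]; exact key e he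
      · exact hNT.2.1 e he f hf
    · rintro ⟨T, hT, h⟩
      exact hNT.2.2 ⟨T, hT, fun e he => h e (mem_insert_of_mem he)⟩
  have := hmax _ this
  omega

lemma spec_push (htn : t + 1 ≤ n) (hkn : k + 1 ≤ n) (hkt : t ≤ k) {a b : Fin n} (hab : a ≠ b)
    (ha : a.val < t + 1) (hb : b.val < t + 1) (hNT : NT n k t F) (hsp : Spec n t a b F)
    (hst : ∀ c d : Fin n, t + 1 ≤ c.val → c < d → ∀ e ∈ F, d ∈ e → c ∉ e →
      insert c (e.erase d) ∈ F) : (low n (k + 1)).erase a ∈ F := by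
  classical
  have h0 : ∃ e ∈ F, a ∉ e := by
    by_contra hcon
    push Not at hcon
    exact hNT.2.2 (spec_triv htn hb hsp hcon)
  obtain ⟨e0, he0, hae0⟩ := h0
  obtain ⟨e, he, hmin⟩ := exists_min_image (F.filter (fun e => a ∉ e)) wt
    ⟨e0, mem_filter.mpr ⟨he0, hae0⟩⟩
  rw [mem_filter] at he
  have hel : (low n (t + 1)).erase a ⊆ e := by
    rcases hsp e he.1 with h | h
    · exact h
    · exact absurd (h (mem_erase.mpr ⟨hab, mem_low.mpr ha⟩)) he.2
  have hcl : ((low n (k + 1)).erase a).card = k := by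
    rw [card_erase_of_mem (mem_low.mpr (by omega)), card_low hkn]; rfl
  by_cases hsub : e ⊆ (low n (k + 1)).erase a
  · rw [← eq_of_subset_of_card_le hsub (by rw [hcl, hNT.1 e he.1])]
    exact he.1
  · exfalso
    have hsub2 : ¬ (low n (k + 1)).erase a ⊆ e := by
      intro h
      apply hsub
      rw [eq_of_subset_of_card_le h (by rw [hcl, hNT.1 e he.1])]
    obtain ⟨d, hd, hd2⟩ := not_subset.mp hsub
    obtain ⟨c, hc, hc2⟩ := not_subset.mp hsub2
    rw [mem_erase, mem_low] at hc
    have hda : d ≠ a := fun h => he.2 (h ▸ hd)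
    have hdk : k + 1 ≤ d.val := by
      by_contra hcon
      exact hd2 (mem_erase.mpr ⟨hda, mem_low.mpr (by omega)⟩)
    have hct : t + 1 ≤ c.val := by
      by_contra hcon
      exact hc2 (hel (mem_erase.mpr ⟨hc.1, mem_low.mpr (by omega)⟩))
    have hcd : c < d := by rw [Fin.lt_def]; omega
    have h1 := hst c d hct hcd e he.1 hd hc2
    have h2 := hmin _ (mem_filter.mpr ⟨h1, by
      rw [mem_insert, not_or]
      exact ⟨fun h => hc.1 h.symm, fun h => he.2 (mem_of_mem_erase h)⟩⟩)
    have h3 := wt_swap hcd hd hc2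
    omega

lemma stage2 (hk : k = t + s) (hs : 1 ≤ s) (hkn : k + 1 ≤ n) {a b : Fin n} (hab : a ≠ b)
    (ha : a.val < t + 1) (hb : b.val < t + 1) (hNT : NT n k t F) (hsp : Spec n t a b F)
    (hmax : ∀ F', NT n k t F' → F'.card ≤ F.card) :
    ∃ F', NT n k t F' ∧ F'.card = F.card ∧ Shifted F' := by
  classical
  have htn : t + 1 ≤ n := by omega
  obtain ⟨G, ⟨hG1, hG2, hG3⟩, hst⟩ := exists_min_fam
    (fun G => NT n k t G ∧ G.card = F.card ∧ Spec n t a b G) ⟨F, hNT, rfl, hsp⟩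
  have hfull := spec_full htn ha hb hG1 hG3 (by rw [hG2]; exact hmax)
  have hst2 : ∀ c d : Fin n, t + 1 ≤ c.val → c < d → ∀ e ∈ G, d ∈ e → c ∉ e →
      insert c (e.erase d) ∈ G := by
    intro c d hc hcd
    apply hst c d hcd
    have hcd' := hcd
    rw [Fin.lt_def] at hcd'
    -- traces are kept
    have htr : ∀ e, ∀ x : Fin n, x.val < t + 1 → (x ∈ shf c d G e ↔ x ∈ e) := by
      intro e x hx
      rcases shf_cases c d G e with ⟨h1, h2, h3, h4⟩ | ⟨h1, h4⟩ <;> rw [h4]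
      have hxc : x ≠ c := by rintro rfl; omega
      have hxd : x ≠ d := by rintro rfl; omega
      simp [hxc, hxd]
    have hsp' : Spec n t a b (shF c d G) := by
      intro f hf
      obtain ⟨e, he, rfl⟩ := mem_image.mp hf
      rcases hG3 e he with h | h
      · left
        intro x hx
        rw [htr e x (mem_low.mp (mem_of_mem_erase hx))]
        exact h hx
      · right
        intro x hx
        rw [htr e x (mem_low.mp (mem_of_mem_erase hx))]
        exact h hx
    refine ⟨⟨shF_uniform c d hG1.1, shF_tint c d hG1.2.1, ?_⟩, by rw [shF_card, hG2], hsp'⟩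
    rintro ⟨T, hT, hTF⟩
    have hfull2 : ∀ A : Finset (Fin n), A.card = k → low n (t + 1) ⊆ A → A ∈ shF c d G := by
      intro A hA hlA
      refine mem_image.mpr ⟨A, hfull A hA hlA, ?_⟩
      rcases shf_cases c d G A with ⟨h1, h2, h3, h4⟩ | ⟨h1, h4⟩
      · exfalso
        apply h3
        apply hfull
        · rw [card_swap h1 h2, hA]
        · intro x hx
          refine mem_insert_of_mem (mem_erase.mpr ⟨?_, hlA hx⟩)
          rintro rfl
          rw [mem_low] at hx
          omega
      · exact h4
    have hTl : T ⊆ low n (t + 1) := by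
      intro z hz
      by_contra hzl
      obtain ⟨B, hB1, hB2, hB3⟩ := exists_subsuperset_card_eq (s := low n (t + 1))
        (t := univ.erase z) (n := k)
        (fun x hx => mem_erase.mpr ⟨fun h => hzl (h ▸ hx), mem_univ _⟩)
        (by rw [card_low htn]; omega)
        (by rw [card_erase_of_mem (mem_univ _), card_univ, Fintype.card_fin]; omega)
      exact (mem_erase.mp (hB2 (hTF B (hfull2 B hB3 hB1) hz))).1 rfl
    have hmiss : ∀ x y : Fin n, x.val < t + 1 → y.val < t + 1 → Spec n t x y G → x ∉ T := by
      intro x y hx hy hsp hxT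
      apply hG1.2.2
      apply spec_triv htn hy hsp
      intro e he
      rw [← htr e x hx]
      exact hTF _ (mem_image_of_mem _ he) hxT
    have haT := hmiss a b ha hb hG3
    have hbT := hmiss b a hb ha (spec_comm hG3)
    have hTs : T ⊆ ((low n (t + 1)).erase a).erase b := by
      intro x hx
      refine mem_erase.mpr ⟨fun h => hbT (h ▸ hx), mem_erase.mpr ⟨fun h => haT (h ▸ hx), hTl hx⟩⟩
    have := card_le_card hTs
    rw [card_erase_of_mem (mem_erase.mpr ⟨hab.symm, mem_low.mpr hb⟩),
      card_erase_of_mem (mem_low.mpr ha), card_low htn, hT] at this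
    have : t ≠ 0 := by
      rintro rfl
      exact hab (Fin.ext (by omega))
    omega
  have h1 := spec_push htn hkn (by omega) hab ha hb hG1 hG3 hst2
  have h2 := spec_push htn hkn (by omega) hab.symm hb ha hG1 (spec_comm hG3) hst2
  have hmany : s + 2 ≤ (G.filter (fun e => e ⊆ low n (k + 1))).card := by
    have hsub : (insert a (insert b (low n (k + 1) \ low n (t + 1)))).image
        (fun x => (low n (k + 1)).erase x) ⊆ G.filter (fun e => e ⊆ low n (k + 1)) := by
      intro e he
      obtain ⟨x, hx, rfl⟩ := mem_image.mp he
      refine mem_filter.mpr ⟨?_, erase_subset _ _⟩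
      rw [mem_insert, mem_insert, mem_sdiff, mem_low, mem_low] at hx
      rcases hx with rfl | rfl | hx
      · exact h1
      · exact h2
      · apply hfull
        · rw [card_erase_of_mem (mem_low.mpr (by omega)), card_low hkn]; rfl
        · intro z hz
          rw [mem_low] at hz
          refine mem_erase.mpr ⟨?_, mem_low.mpr (by omega)⟩
          rintro rfl
          omega
    have := card_le_card hsub
    rw [card_image_of_injOn, card_insert_of_notMem, card_insert_of_notMem, card_sdiff_of_subset,
      card_low hkn, card_low htn] at this
    · omega
    · intro x hx
      rw [mem_low] at hx ⊢
      omega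
    · rw [mem_sdiff, mem_low, mem_low]; omega
    · rw [mem_insert, mem_sdiff, mem_low, mem_low, not_or]
      exact ⟨hab, by omega⟩
    · intro x hx y hy hxy
      have hxl : x.val < k + 1 := by
        rw [mem_coe, mem_insert, mem_insert, mem_sdiff, mem_low, mem_low] at hx
        rcases hx with rfl | rfl | hx <;> omega
      by_contra hne
      have : x ∈ (low n (k + 1)).erase y := mem_erase.mpr ⟨hne, mem_low.mpr hxl⟩
      simp only at hxy
      rw [← hxy] at this
      exact (mem_erase.mp this).1 rfl
  obtain ⟨F', h3, h4, h5⟩ := stage3 hk hkn hG1.1 hG1.2.1 hmany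
  exact ⟨F', h3, h4.trans hG2, h5⟩

/-- permuted family -/
def permF (σ : Equiv.Perm (Fin n)) (F : Finset (Finset (Fin n))) : Finset (Finset (Fin n)) :=
  F.image (fun e => e.map σ.toEmbedding)

lemma permF_card (σ : Equiv.Perm (Fin n)) : (permF σ F).card = F.card :=
  card_image_of_injective _ (map_injective _)

lemma permF_NT (σ : Equiv.Perm (Fin n)) (h : NT n k t F) : NT n k t (permF σ F) := by
  classical
  refine ⟨?_, ?_, ?_⟩
  · intro e he
    obtain ⟨f, hf, rfl⟩ := mem_image.mp he
    rw [card_map]; exact h.1 f hf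
  · intro e0 he0 f0 hf0
    obtain ⟨e, he, rfl⟩ := mem_image.mp he0
    obtain ⟨f, hf, rfl⟩ := mem_image.mp hf0
    rw [← map_inter, card_map]
    exact h.2.1 e he f hf
  · rintro ⟨T, hT, hTF⟩
    apply h.2.2
    refine ⟨T.map σ.symm.toEmbedding, by rw [card_map, hT], fun e he x hx => ?_⟩
    obtain ⟨y, hy, rfl⟩ := mem_map.mp hx
    have := hTF _ (mem_image_of_mem _ he) hy
    obtain ⟨z, hz, rfl⟩ := mem_map.mp this
    simpa using hz

lemma exists_perm_low {m : ℕ} (hm : m ≤ n) (V : Finset (Fin n)) (hV : V.card = m) :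
    ∃ σ : Equiv.Perm (Fin n), ∀ x, x ∈ V ↔ (σ x).val < m := by
  classical
  have e : {x // x ∈ V} ≃ {x // x ∈ low n m} :=
    Finset.equivOfCardEq (by rw [hV, card_low hm])
  refine ⟨e.extendSubtype, fun x => ⟨fun hx => ?_, fun hx => ?_⟩⟩
  · exact mem_low.mp (e.extendSubtype_mem x hx)
  · by_contra hxV
    exact e.extendSubtype_not_mem x hxV (mem_low.mpr hx)

theorem exists_shifted (hk : k = t + s) (hs : 1 ≤ s) (hkn : k + 1 ≤ n)
    (hNT : NT n k t F) (hmax : ∀ F', NT n k t F' → F'.card ≤ F.card) :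
    ∃ F', NT n k t F' ∧ F'.card = F.card ∧ Shifted F' := by
  classical
  obtain ⟨G, ⟨hG1, hG2⟩, hst⟩ := exists_min_fam
    (fun G => NT n k t G ∧ G.card = F.card) ⟨F, hNT, rfl⟩
  by_cases hall : ∀ a b : Fin n, a < b → NT n k t (shF a b G)
  · refine ⟨G, hG1, hG2, fun e he a b hab hb ha => ?_⟩
    exact hst a b hab ⟨hall a b hab, by rw [shF_card, hG2]⟩ e he hb ha
  · push Not at hall
    obtain ⟨a, b, hab, hnot⟩ := hall
    have htriv : IsTrivialHyp n t (shF a b G) := by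
      by_contra hc
      exact hnot ⟨shF_uniform a b hG1.1, shF_tint a b hG1.2.1, hc⟩
    obtain ⟨T, hT, hTF⟩ := htriv
    have hTe : ∀ e ∈ G, T ⊆ shf a b G e := fun e he => hTF _ (mem_image_of_mem _ he)
    obtain ⟨e0, he0, hTe0⟩ : ∃ e ∈ G, ¬ T ⊆ e := by
      by_contra hcon
      push Not at hcon
      exact hG1.2.2 ⟨T, hT, hcon⟩
    have h0 := hTe e0 he0
    have haTbT : a ∈ T ∧ b ∉ T := by
      rcases shf_cases a b G e0 with ⟨h1, h2, h3, h4⟩ | ⟨h1, h4⟩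
      · rw [h4] at h0
        constructor
        · by_contra haT
          apply hTe0
          intro x hx
          rcases mem_insert.mp (h0 hx) with rfl | h
          · exact absurd hx haT
          · exact mem_of_mem_erase h
        · intro hbT
          rcases mem_insert.mp (h0 hbT) with h | h
          · exact hab.ne h.symm
          · exact (mem_erase.mp h).1 rfl
      · rw [h4] at h0
        exact absurd h0 hTe0
    obtain ⟨haT, hbT⟩ := haTbT
    obtain ⟨σ, hσ⟩ := exists_perm_low (n := n) (m := t + 1) (by omega) (insert b T)
      (by rw [card_insert_of_notMem hbT, hT])
    have hV : ∀ y : Fin n, y ∈ low n (t + 1) → σ.symm y ∈ insert b T := by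
      intro y hy
      rw [hσ, Equiv.apply_symm_apply]
      exact mem_low.mp hy
    have hsp : Spec n t (σ a) (σ b) (permF σ G) := by
      intro f hf
      obtain ⟨e, he, rfl⟩ := mem_image.mp hf
      have h1 := hTe e he
      have hmm : ∀ y, y ∈ e.map σ.toEmbedding ↔ σ.symm y ∈ e := by
        intro y
        rw [mem_map_equiv]
      rcases shf_cases a b G e with ⟨g1, g2, g3, g4⟩ | ⟨g1, g4⟩ <;> rw [g4] at h1
      · left
        intro y hy
        rw [mem_erase] at hy
        rw [hmm]
        rcases mem_insert.mp (hV y hy.2) with h | h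
        · rw [h]; exact g1
        · rcases mem_insert.mp (h1 h) with h | h
          · exact absurd (by rw [← h, Equiv.apply_symm_apply]) hy.1
          · exact mem_of_mem_erase h
      · right
        intro y hy
        rw [mem_erase] at hy
        rw [hmm]
        rcases mem_insert.mp (hV y hy.2) with h | h
        · exact absurd (by rw [← h, Equiv.apply_symm_apply]) hy.1
        · exact h1 h
    obtain ⟨F', h3, h4, h5⟩ := stage2 hk hs hkn (fun h => hab.ne (σ.injective h))
      ((hσ a).mp (mem_insert_of_mem haT)) ((hσ b).mp (mem_insert_self _ _)) (permF_NT σ hG1) hsp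
      (by rw [permF_card, hG2]; exact hmax)
    exact ⟨F', h3, by rw [h4, permF_card, hG2], h5⟩

theorem nt_bound (hk : k = t + s) (ht : 1 ≤ t) (hs : 1 ≤ s) (hnn : (t + 1) * (s + 1) + 1 ≤ n)
    (hNT : NT n k t F) :
    ∃ m, t + 2 ≤ m ∧ m ≤ k + 1 ∧
      F.card + (n - m).choose s ≤ (n - t).choose s + t * (n - m).choose (k + 1 - m) := by
  classical
  have hts : s ≤ t * s := Nat.le_mul_of_pos_left s ht
  have hkn : k + 1 ≤ n := by nlinarith
  obtain ⟨G, hG, hmax⟩ := exists_max_image (univ.filter (fun G => NT n k t G)) card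
    ⟨F, by simpa using hNT⟩
  rw [mem_filter] at hG
  obtain ⟨F', h3, h4, h5⟩ := exists_shifted hk hs hkn hG.2
    (fun F' h => hmax F' (mem_filter.mpr ⟨mem_univ _, h⟩))
  obtain ⟨m, h6, h7, h8⟩ := ak_structure hk ht hs hnn h3 h5
    (fun F' h => by rw [h4]; exact hmax F' (mem_filter.mpr ⟨mem_univ _, h⟩))
  have := hmax F (mem_filter.mpr ⟨mem_univ _, hNT⟩)
  exact ⟨m, h6, h7, by omega⟩
end

end

section
open Finset

/-- sets of size at most `s` -/
lemma card_nonempty_small {α : Type*} [DecidableEq α] (S : Finset α) (b : ℕ)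
    : ∀ G : Finset α, G ⊆ S → G.Nonempty → G.card ≤ b →
      ∃ f ∈ Fintype.piFinset (fun _ : Fin b => S), univ.image f = G := by
  intro G hGS hne hb
  obtain ⟨x0, hx0⟩ := hne
  let e := G.equivFin
  refine ⟨fun i => if h : i.val < G.card then (e.symm ⟨i.val, h⟩ : α) else x0, ?_, ?_⟩
  · rw [Fintype.mem_piFinset]
    intro i
    by_cases h : i.val < G.card
    · simp only [h, dif_pos]
      exact hGS (e.symm ⟨i.val, h⟩).2
    · simp only [h, dif_neg, not_false_eq_true]
      exact hGS hx0
  · ext x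
    rw [mem_image]
    constructor
    · rintro ⟨i, _, rfl⟩
      by_cases h : i.val < G.card
      · simp only [h, dif_pos]
        exact (e.symm ⟨i.val, h⟩).2
      · simp only [h, dif_neg, not_false_eq_true]
        exact hx0
    · intro hx
      have hlt := (e ⟨x, hx⟩).isLt
      refine ⟨⟨(e ⟨x, hx⟩).val, by omega⟩, mem_univ _, ?_⟩
      simp only [hlt, dif_pos, Fin.eta, Equiv.symm_apply_apply]

lemma card_small (n s : ℕ) (hs : 1 ≤ s) :
    ((univ : Finset (Finset (Fin n))).filter (fun X => X.card ≤ s)).card ≤ (n + 1) ^ s := by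
  classical
  have hsub : (univ : Finset (Finset (Fin n))).filter (fun X => X.card ≤ s) ⊆
      insert ∅ ((Fintype.piFinset (fun _ : Fin s => (univ : Finset (Fin n)))).image
        (fun f => univ.image f)) := by
    intro X hX
    rw [mem_filter] at hX
    rcases X.eq_empty_or_nonempty with h | h
    · rw [h]; exact mem_insert_self _ _
    · apply mem_insert_of_mem
      obtain ⟨f, hf, hfX⟩ := card_nonempty_small univ s X (subset_univ _) h hX.2
      exact mem_image.mpr ⟨f, hf, hfX⟩
  have h1 := (card_le_card hsub).trans (card_insert_le _ _)
  have h2 := card_image_le (s := Fintype.piFinset (fun _ : Fin s => (univ : Finset (Fin n))))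
    (f := fun f => (univ.image f : Finset (Fin n)))
  rw [Fintype.card_piFinset] at h2
  simp only [card_univ, Fintype.card_fin, prod_const] at h2
  have h3 := Nat.pow_lt_pow_left (Nat.lt_succ_self n) (show s ≠ 0 by omega)
  simp only [Nat.succ_eq_add_one] at h3
  omega

section
variable {n k t s : ℕ}

/-- sets meeting every member of `G` in at least `t` elements -/
def Iv (n k t : ℕ) (G : Finset (Finset (Fin n))) : Finset (Finset (Fin n)) :=
  (powersetCard k univ).filter (fun A => ∀ B ∈ G, t ≤ (A ∩ B).card)

lemma mem_Iv {G : Finset (Finset (Fin n))} {A : Finset (Fin n)} :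
    A ∈ Iv n k t G ↔ A.card = k ∧ ∀ B ∈ G, t ≤ (A ∩ B).card := by
  simp [Iv, mem_powersetCard]

lemma card_ball (hk : k = t + s) (hs : 1 ≤ s) (A : Finset (Fin n)) (hA : A.card = k) :
    (Iv n k t {A}).card ≤ (n + 1) ^ (2 * s) := by
  classical
  set S := (univ : Finset (Finset (Fin n))).filter (fun X => X.card ≤ s)
  have h1 : (Iv n k t {A}).card ≤ (S ×ˢ S).card := by
    apply card_le_card_of_injOn (fun B => (A \ B, B \ A))
    · intro B hB
      rw [mem_coe, mem_Iv] at hB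
      have h2 := hB.2 A (mem_singleton_self _)
      have h3 := card_inter_add_card_sdiff B A
      have h4 := card_inter_add_card_sdiff A B
      rw [inter_comm] at h4
      simp only [S, coe_product, Set.mem_prod, mem_coe, mem_filter, mem_univ, true_and]
      omega
    · intro B _ C _ h
      simp only [Prod.mk.injEq] at h
      ext x
      have h5 := congrArg (fun Z => x ∈ Z) h.1
      have h6 := congrArg (fun Z => x ∈ Z) h.2
      simp only [mem_sdiff, eq_iff_iff] at h5 h6
      tauto
  have h2 : S.card ≤ (n + 1) ^ s := card_small n s hs
  rw [card_product] at h1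
  calc _ ≤ _ := h1
    _ ≤ (n + 1) ^ s * (n + 1) ^ s := Nat.mul_le_mul h2 h2
    _ = _ := by rw [← pow_add]; congr 1; omega

lemma exists_gen (hk : k = t + s) (ht : 1 ≤ t) (hkn : k ≤ n) (hn : 2 * k + 1 ≤ n + t)
    {H : Finset (Finset (Fin n))} (hH : NT n k t H) :
    ∃ A1 G, A1.card = k ∧ G ⊆ Iv n k t {A1} ∧ G.Nonempty ∧
      G.card ≤ (2 * s + 2).choose (s + 1) ∧ NT n k t (Iv n k t G) ∧ H ⊆ Iv n k t G := by
  classical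
  obtain ⟨F, hF, hmax⟩ := exists_max_image (univ.filter (fun G => NT n k t G ∧ H ⊆ G)) card
    ⟨H, by simpa using hH⟩
  simp only [mem_filter, mem_univ, true_and] at hF hmax
  obtain ⟨hNT, hHF⟩ := hF
  have hIF : Iv n k t F = F := by
    ext A
    constructor
    · intro hA
      rw [mem_Iv] at hA
      by_contra hAF
      have hc := card_insert_of_notMem hAF
      have : NT n k t (insert A F) := by
        refine ⟨?_, ?_, ?_⟩
        · intro e he0
          rcases mem_insert.mp he0 with rfl | he
          · exact hA.1
          · exact hNT.1 e he
        · intro e he0 f hf0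
          rcases mem_insert.mp he0 with rfl | he <;> rcases mem_insert.mp hf0 with rfl | hf
          · rw [inter_self]; omega
          · exact hA.2 f hf
          · rw [inter_comm]; exact hA.2 e he
          · exact hNT.2.1 e he f hf
        · rintro ⟨T, hT, h⟩
          exact hNT.2.2 ⟨T, hT, fun e he => h e (mem_insert_of_mem he)⟩
      have := hmax _ ⟨this, hHF.trans (subset_insert _ _)⟩
      omega
    · intro hA
      rw [mem_Iv]
      exact ⟨hNT.1 A hA, fun B hB => hNT.2.1 A hA B hB⟩
  obtain ⟨G, hG, hmin⟩ := exists_min_image (F.powerset.filter (fun G => Iv n k t G = F)) card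
    ⟨F, by simpa using hIF⟩
  simp only [mem_filter, mem_powerset] at hG hmin
  obtain ⟨hGF, hGI⟩ := hG
  have hne : G.Nonempty := by
    rw [nonempty_iff_ne_empty]
    rintro rfl
    obtain ⟨A, B, _, _, hA, hB, hAB⟩ := exists_ext hkn hn _ (∅ : Finset (Fin n)) ∅ (by simp) (by simp)
      (by simp; omega) rfl
    have : ∀ A : Finset (Fin n), A.card = k → A ∈ F := by
      intro A hA
      rw [← hGI, mem_Iv]
      exact ⟨hA, by simp⟩
    have := hNT.2.1 A (this A hA) B (this B hB)
    omega
  obtain ⟨A1, hA1⟩ := hne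
  refine ⟨A1, G, hNT.1 A1 (hGF hA1), ?_, ⟨A1, hA1⟩, ?_, hGI ▸ hNT, hGI ▸ hHF⟩
  · intro B hB
    rw [mem_Iv]
    refine ⟨hNT.1 B (hGF hB), fun C hC => ?_⟩
    rw [mem_singleton] at hC
    rw [hC]
    exact hNT.2.1 B (hGF hB) A1 (hGF hA1)
  · have hex : ∀ B : {B // B ∈ G}, ∃ A : Finset (Fin n), A ∈ Iv n k t (G.erase B.1) ∧
        (A ∩ B.1).card < t := by
      rintro ⟨B, hB⟩
      simp only
      by_contra hcon
      push Not at hcon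
      have heq : Iv n k t (G.erase B) = F := by
        rw [← hGI]
        ext A
        constructor
        · intro hA
          have h2 := hcon A hA
          rw [mem_Iv] at hA ⊢
          refine ⟨hA.1, fun C hC => ?_⟩
          by_cases hCB : C = B
          · rw [hCB]; exact h2
          · exact hA.2 C (mem_erase.mpr ⟨hCB, hC⟩)
        · intro hA
          rw [mem_Iv] at hA ⊢
          exact ⟨hA.1, fun C hC => hA.2 C (mem_of_mem_erase hC)⟩
      have h3 := hmin _ ⟨(erase_subset _ _).trans hGF, heq⟩
      rw [card_erase_of_mem hB] at h3
      have : 0 < G.card := card_pos.mpr ⟨B, hB⟩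
      omega
    choose A hA1 hA2 using hex
    have := set_pair hk A (fun B : {B // B ∈ G} => B.1) (fun i => (mem_Iv.mp (hA1 i)).1)
      (fun i => hNT.1 _ (hGF i.2)) hA2 (fun i j hij => by
        apply (mem_Iv.mp (hA1 i)).2
        exact mem_erase.mpr ⟨fun h => hij (Subtype.ext h.symm), j.2⟩)
    rwa [Fintype.card_coe] at this

lemma choose_k_le (hk : k = t + s) (hkn : k ≤ n) :
    n.choose k ≤ n.choose t * (n + 1) ^ s := by
  have h := Nat.choose_mul (n := n) (k := k) (s := t) (by omega)
  have h1 : 0 < k.choose t := Nat.choose_pos (by omega)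
  have h2 : (n - t).choose (k - t) ≤ (n + 1) ^ s := by
    rw [show k - t = s by omega]
    exact (Nat.choose_le_pow _ _).trans (Nat.pow_le_pow_left (by omega) _)
  calc n.choose k ≤ n.choose k * k.choose t := Nat.le_mul_of_pos_right _ h1
    _ = _ := h
    _ ≤ _ := Nat.mul_le_mul_left _ h2

open Classical in
theorem count_nt (hk : k = t + s) (ht : 1 ≤ t) (hs : 1 ≤ s) (hkn : k ≤ n) (hn : 2 * k + 1 ≤ n + t)
    (M : ℕ) (hM : ∀ F, NT n k t F → F.card ≤ M) :
    (univ.filter (fun H => NT n k t H)).card ≤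
      n.choose t * (n + 1) ^ (s + 2 * s * (2 * s + 2).choose (s + 1)) * 2 ^ M := by
  set b := (2 * s + 2).choose (s + 1) with hb
  let Q : Finset (Finset (Fin n)) → Finset (Finset (Finset (Fin n))) := fun G =>
    if NT n k t (Iv n k t G) then (Iv n k t G).powerset else ∅
  have hQ : ∀ G, (Q G).card ≤ 2 ^ M := by
    intro G
    simp only [Q]
    split_ifs with h
    · rw [card_powerset]
      exact Nat.pow_le_pow_right (by norm_num) (hM _ h)
    · simp
  have hsub : univ.filter (fun H => NT n k t H) ⊆ (powersetCard k (univ : Finset (Fin n))).biUnion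
      (fun A => (Fintype.piFinset (fun _ : Fin b => Iv n k t {A})).biUnion
        (fun f => Q (univ.image f))) := by
    intro H hH
    rw [mem_filter] at hH
    obtain ⟨A1, G, h1, h2, h3, h4, h5, h6⟩ := exists_gen hk ht hkn hn hH.2
    obtain ⟨f, hf, hfG⟩ := card_nonempty_small _ _ G h2 h3 h4
    rw [mem_biUnion]
    refine ⟨A1, mem_powersetCard.mpr ⟨subset_univ _, h1⟩, ?_⟩
    rw [mem_biUnion]
    refine ⟨f, hf, ?_⟩
    rw [hfG]
    simp only [Q, if_pos h5, mem_powerset]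
    exact h6
  refine (card_le_card hsub).trans ?_
  have h1 : ∀ A ∈ powersetCard k (univ : Finset (Fin n)),
      ((Fintype.piFinset (fun _ : Fin b => Iv n k t {A})).biUnion
        (fun f => Q (univ.image f))).card ≤ ((n + 1) ^ (2 * s)) ^ b * 2 ^ M := by
    intro A hA
    refine (card_biUnion_le_card_mul _ _ (2 ^ M) (fun f _ => hQ _)).trans ?_
    apply Nat.mul_le_mul_right
    rw [Fintype.card_piFinset]
    simp only [prod_const, card_univ, Fintype.card_fin]
    exact Nat.pow_le_pow_left (card_ball hk hs A (mem_powersetCard.mp hA).2) _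
  refine (card_biUnion_le_card_mul _ _ _ h1).trans ?_
  rw [card_powersetCard, card_univ, Fintype.card_fin, ← mul_assoc]
  apply Nat.mul_le_mul_right
  calc _ ≤ n.choose t * (n + 1) ^ s * ((n + 1) ^ (2 * s)) ^ b :=
        Nat.mul_le_mul_right _ (choose_k_le hk hkn)
    _ = _ := by rw [← pow_mul, mul_assoc, ← pow_add]
end

end

section

lemma size_small (K : ℕ) : ∃ n0 : ℕ, ∀ n, n0 ≤ n → K * Nat.size (n + 1) ≤ n := by
  refine ⟨2 ^ (4 * K + 4), fun n hn => ?_⟩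
  obtain ⟨l, hl⟩ : ∃ l, Nat.size (n + 1) = l := ⟨_, rfl⟩
  have h1 : 4 * K + 4 < l := by
    rw [← hl, Nat.lt_size]; omega
  have h2 : 2 ^ (l - 1) ≤ n + 1 := by
    rw [← Nat.lt_size, hl]; omega
  rw [hl]
  obtain ⟨j, rfl⟩ : ∃ j, l = j + 1 := ⟨l - 1, by omega⟩
  rw [Nat.add_sub_cancel] at h2
  obtain ⟨i, hi⟩ : ∃ i, j / 2 = i := ⟨_, rfl⟩
  have h3 : (i + 1) * (i + 1) ≤ 2 ^ j := by
    calc (i + 1) * (i + 1) ≤ 2 ^ i * 2 ^ i := Nat.mul_le_mul Nat.lt_two_pow_self Nat.lt_two_pow_self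
      _ = 2 ^ (i + i) := by rw [pow_add]
      _ ≤ 2 ^ j := Nat.pow_le_pow_right (by norm_num) (by omega)
  have h4 : 2 * K + 1 ≤ i + 1 := by omega
  have h5 : j + 1 ≤ 2 * (i + 1) := by omega
  have h6 := Nat.mul_le_mul_left K h5
  have h7 := Nat.mul_le_mul_right (i + 1) h4
  have h8 : (2 * K + 1) * (i + 1) = K * (2 * (i + 1)) + i + 1 := by ring
  omega

lemma pow_choose_le (r s u : ℕ) : r ^ u * s.choose u ≤ (r * s).choose u := by
  rcases Nat.eq_zero_or_pos r with rfl | hr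
  · rcases Nat.eq_zero_or_pos u with rfl | hu
    · simp
    · rw [zero_pow (by omega), zero_mul]; exact Nat.zero_le _
  induction u with
  | zero => simp
  | succ u ih =>
    apply Nat.le_of_mul_le_mul_right _ (Nat.succ_pos u)
    have h1 := Nat.choose_succ_right_eq s u
    have h2 := Nat.choose_succ_right_eq (r * s) u
    calc r ^ (u + 1) * s.choose (u + 1) * (u + 1) = r ^ u * r * (s.choose (u + 1) * (u + 1)) := by ring
      _ = (r ^ u * s.choose u) * (r * (s - u)) := by rw [h1]; ring
      _ ≤ (r * s).choose u * (r * s - u) := by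
        apply Nat.mul_le_mul ih
        rw [Nat.mul_sub]
        have : u ≤ r * u := Nat.le_mul_of_pos_left u hr
        omega
      _ = _ := by rw [h2]

lemma choose_ratio {P Q r : ℕ} (hr : 1 ≤ r) (hQ : 1 ≤ Q) (hPQ : Q ≤ P) :
    Q.choose r * P ≤ P.choose r * Q := by
  obtain ⟨r, rfl⟩ : ∃ r', r = r' + 1 := ⟨r - 1, by omega⟩
  obtain ⟨q, rfl⟩ : ∃ r', Q = r' + 1 := ⟨Q - 1, by omega⟩
  obtain ⟨p, rfl⟩ : ∃ r', P = r' + 1 := ⟨P - 1, by omega⟩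
  have h1 := Nat.add_one_mul_choose_eq q r
  have h2 := Nat.add_one_mul_choose_eq p r
  apply Nat.le_of_mul_le_mul_right _ (show 0 < r + 1 by omega)
  calc (q + 1).choose (r + 1) * (p + 1) * (r + 1) = ((q + 1).choose (r + 1) * (r + 1)) * (p + 1) := by ring
    _ = (q + 1) * (p + 1) * q.choose r := by rw [← h1]; ring
    _ ≤ (q + 1) * (p + 1) * p.choose r :=
      Nat.mul_le_mul_left _ (Nat.choose_le_choose _ (by omega))
    _ = ((p + 1).choose (r + 1) * (r + 1)) * (q + 1) := by rw [← h2]; ring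
    _ = _ := by ring

/-- transfer via the ratio bound -/
lemma choose_transfer {P Q r K X l : ℕ} (hr : 1 ≤ r) (hQ : 1 ≤ Q) (hPQ : Q ≤ P) (hK : K * l ≤ P)
    (hX : X * Q ≤ K * Q.choose r) : X * l ≤ P.choose r := by
  apply Nat.le_of_mul_le_mul_right _ hQ
  calc X * l * Q = X * Q * l := by ring
    _ ≤ K * Q.choose r * l := Nat.mul_le_mul_right _ hX
    _ = Q.choose r * (K * l) := by ring
    _ ≤ Q.choose r * P := Nat.mul_le_mul_left _ hK
    _ ≤ _ := choose_ratio hr hQ hPQ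

lemma choose_two_add (s d : ℕ) (hd : d ≤ s) :
    3 ^ d * (2 * s).choose s ≤ 2 ^ d * (2 * s + d).choose s := by
  induction d with
  | zero => simp
  | succ d ih =>
    have ih := ih (by omega)
    have h1 := Nat.choose_mul_succ_eq (2 * s + d) s
    rw [show 2 * s + d + 1 - s = s + d + 1 by omega] at h1
    apply Nat.le_of_mul_le_mul_right _ (show 0 < s + d + 1 by omega)
    calc 3 ^ (d + 1) * (2 * s).choose s * (s + d + 1)
        = (3 ^ d * (2 * s).choose s) * (3 * (s + d + 1)) := by ring
      _ ≤ (2 ^ d * (2 * s + d).choose s) * (2 * (2 * s + d + 1)) :=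
        Nat.mul_le_mul ih (by omega)
      _ = 2 ^ (d + 1) * ((2 * s + d).choose s * (2 * s + d + 1)) := by ring
      _ = _ := by rw [h1]; ring_nf

lemma four_pow_le (s : ℕ) (hs : 1 ≤ s) : 4 ^ s ≤ 2 * s * (2 * s).choose s := by
  have := Nat.four_pow_le_two_mul_self_mul_centralBinom s hs
  rwa [Nat.centralBinom_eq_two_mul_choose] at this

lemma exists_K0 : ∃ K : ℕ, ∀ s : ℕ, s ^ 4 * 2 ^ s ≤ K * 3 ^ s := by
  have h := tendsto_pow_const_div_const_pow_of_one_lt 4 (show (1:ℝ) < 3 / 2 by norm_num)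
  obtain ⟨C, hC⟩ := h.bddAbove_range
  refine ⟨⌈C⌉₊, fun s => ?_⟩
  have h1 : (s:ℝ) ^ 4 / (3 / 2) ^ s ≤ C := hC ⟨s, rfl⟩
  have h2 := h1.trans (Nat.le_ceil C)
  rw [div_le_iff₀ (by positivity), div_pow, ← mul_div_assoc, le_div_iff₀ (by positivity)] at h2
  exact_mod_cast h2

lemma exists_K1 : ∃ K : ℕ, ∀ s : ℕ, 2 ≤ s → 16 * s ^ 2 * 4 ^ s * (3 * s) ≤ K * (3 * s).choose (s - 1) := by
  obtain ⟨K, hK⟩ := exists_K0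
  refine ⟨288 * K, fun s hs => ?_⟩
  have h1 := choose_two_add s s le_rfl
  rw [show 2 * s + s = 3 * s by ring] at h1
  have h2 := four_pow_le s (by omega)
  have h3 := Nat.choose_succ_right_eq (3 * s) (s - 1)
  rw [show s - 1 + 1 = s by omega, show 3 * s - (s - 1) = 2 * s + 1 by omega] at h3
  have h4 : (3 * s).choose s ≤ 3 * (3 * s).choose (s - 1) := by
    apply Nat.le_of_mul_le_mul_right _ (show 0 < s by omega)
    rw [h3]
    have : 2 * s + 1 ≤ 3 * s := by omega
    calc (3 * s).choose (s - 1) * (2 * s + 1) ≤ (3 * s).choose (s - 1) * (3 * s) := Nat.mul_le_mul_left _ this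
      _ = _ := by ring
  have h5 : 3 ^ s * 4 ^ s ≤ 2 ^ s * (6 * s * (3 * s).choose (s - 1)) := by
    calc 3 ^ s * 4 ^ s ≤ 3 ^ s * (2 * s * (2 * s).choose s) := Nat.mul_le_mul_left _ h2
      _ = 2 * s * (3 ^ s * (2 * s).choose s) := by ring
      _ ≤ 2 * s * (2 ^ s * (3 * (3 * s).choose (s - 1))) :=
        Nat.mul_le_mul_left _ (h1.trans (Nat.mul_le_mul_left _ h4))
      _ = _ := by ring
  have h6 := hK s
  apply Nat.le_of_mul_le_mul_right _ (show 0 < s * (2 ^ s * 3 ^ s) by positivity)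
  calc 16 * s ^ 2 * 4 ^ s * (3 * s) * (s * (2 ^ s * 3 ^ s)) = 48 * (s ^ 4 * 2 ^ s) * (3 ^ s * 4 ^ s) := by ring
    _ ≤ 48 * (K * 3 ^ s) * (2 ^ s * (6 * s * (3 * s).choose (s - 1))) :=
      Nat.mul_le_mul (Nat.mul_le_mul_left _ h6) h5
    _ = _ := by ring

lemma three_halves_pow {s d : ℕ} (hd : 8 * Real.log ((s : ℝ) + 1) ≤ d) :
    (s + 1) ^ 3 * 2 ^ d ≤ 3 ^ d := by
  have h1 : Real.exp (3 / 8) ≤ 3 / 2 := by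
    have h2 : Real.exp (3 / 8) ^ 8 ≤ (3 / 2 : ℝ) ^ 8 := by
      rw [← Real.exp_nat_mul]
      have h3 : Real.exp (((8 : ℕ) : ℝ) * (3 / 8)) = Real.exp 1 ^ 3 := by
        rw [← Real.exp_nat_mul]; norm_num
      rw [h3]
      have h4 := Real.exp_one_lt_d9
      calc Real.exp 1 ^ 3 ≤ (2.7182818286 : ℝ) ^ 3 := pow_le_pow_left₀ (Real.exp_pos _).le h4.le 3
        _ ≤ _ := by norm_num
    exact le_of_pow_le_pow_left₀ (by norm_num) (by norm_num) h2
  have h5 : ((s : ℝ) + 1) ^ 3 ≤ (3 / 2 : ℝ) ^ d := by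
    have hs : (0:ℝ) < (s : ℝ) + 1 := by positivity
    calc ((s : ℝ) + 1) ^ 3 = Real.exp (Real.log ((s : ℝ) + 1)) ^ 3 := by rw [Real.exp_log hs]
      _ = Real.exp (3 * Real.log ((s : ℝ) + 1)) := by rw [← Real.exp_nat_mul]; norm_num
      _ ≤ Real.exp (d * (3 / 8)) := Real.exp_le_exp.mpr (by linarith)
      _ = Real.exp (3 / 8) ^ d := Real.exp_nat_mul _ _
      _ ≤ _ := pow_le_pow_left₀ (Real.exp_pos _).le h1 d
  rw [div_pow, le_div_iff₀ (by positivity)] at h5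
  exact_mod_cast h5

lemma exists_K2 : ∃ K : ℕ, (∀ s P l : ℕ, 2 ≤ s → 3 * s ≤ P → K * l ≤ P →
      16 * s ^ 2 * 4 ^ s * l ≤ P.choose (s - 1)) ∧
    (∀ s N l : ℕ, 2 ≤ s → 2 * s ≤ N → (3 * s ≤ N ∨ 2 * (s:ℝ) + 8 * Real.log ((s:ℝ) + 1) ≤ N) →
      K * l ≤ N → 32 * s * 4 ^ s * l ≤ N.choose s) := by
  obtain ⟨K, hK⟩ := exists_K1
  refine ⟨K + 192, ?_, ?_⟩
  · intro s P l hs hP hl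
    exact choose_transfer (by omega) (by omega) hP (K := K) (by nlinarith) (hK s hs)
  · intro s N l hs hN2 hN hl
    by_cases h3 : 3 * s ≤ N
    · refine choose_transfer (by omega) (show 1 ≤ 3 * s by omega) h3 (K := K) (by nlinarith) ?_
      have h4 : (3 * s).choose (s - 1) ≤ (3 * s).choose s := by
        have := Nat.choose_le_succ_of_lt_half_left (r := s - 1) (n := 3 * s) (by omega)
        rwa [show s - 1 + 1 = s by omega] at this
      refine le_trans ?_ ((hK s hs).trans (Nat.mul_le_mul_left _ h4))
      apply Nat.mul_le_mul_right
      apply Nat.mul_le_mul_right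
      nlinarith
    · have hN' : 2 * (s:ℝ) + 8 * Real.log ((s:ℝ) + 1) ≤ N := by
        rcases hN with h | h
        · exact absurd h h3
        · exact h
      obtain ⟨d, rfl⟩ : ∃ d, N = 2 * s + d := ⟨N - 2 * s, by omega⟩
      push_cast at hN'
      have h5 := three_halves_pow (s := s) (d := d) (by linarith)
      have h6 := choose_two_add s d (by omega)
      have h7 := four_pow_le s (by omega)
      refine choose_transfer (by omega) (show 1 ≤ 2 * s + d by omega) le_rfl (K := 192) (by nlinarith) ?_
      apply Nat.le_of_mul_le_mul_right _ (show 0 < 2 ^ d * (s + 1) ^ 3 by positivity)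
      have h8 : 2 * s + d ≤ 3 * s := by omega
      calc 32 * s * 4 ^ s * (2 * s + d) * (2 ^ d * (s + 1) ^ 3)
          = 32 * s * (2 * s + d) * 4 ^ s * ((s + 1) ^ 3 * 2 ^ d) := by ring
        _ ≤ 32 * s * (3 * s) * (2 * s * (2 * s).choose s) * 3 ^ d := by gcongr
        _ = 192 * s ^ 3 * (3 ^ d * (2 * s).choose s) := by ring
        _ ≤ 192 * (s + 1) ^ 3 * (2 ^ d * (2 * s + d).choose s) := by gcongr; omega
        _ = _ := by ring

end

section

/-- numerical facts from the hypothesis, `s ≥ 2` -/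
lemma cond_of_hyp {n k t s : ℕ} (hk : k = t + s) (ht : 1 ≤ t) (hs : 2 ≤ s)
    (h : (t + 1 : ℝ) * (k - t + 1 : ℝ) + eta k t ≤ (n : ℝ)) :
    ∃ N, n = N + t + 1 + s ∧ t * s ≤ N ∧ 2 * s + 1 ≤ N ∧ (t + 1) * (s + 1) + 1 ≤ n ∧
      (3 * s ≤ N ∨ 2 * (s:ℝ) + 8 * Real.log ((s:ℝ) + 1) ≤ N) := by
  have hkr : (k : ℝ) = t + s := by rw [hk]; push_cast; ring
  have hsr : (2:ℝ) ≤ s := by exact_mod_cast hs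
  have htr : (1:ℝ) ≤ t := by exact_mod_cast ht
  have hlog : ∀ x : ℕ, 3 ≤ x → 1 ≤ Real.log x := by
    intro x hx
    have hx' : (3:ℝ) ≤ x := by exact_mod_cast hx
    rw [Real.le_log_iff_exp_le (by linarith)]
    have := Real.exp_one_lt_d9
    linarith
  have hk3 : 3 ≤ k := by omega
  have hlk := hlog k hk3
  rw [show ((t:ℝ) + 1) * ((k:ℝ) - t + 1) = (t + 1) * (s + 1) by rw [hkr]; ring] at h
  have heta1 : 1 ≤ eta k t := by
    unfold eta
    have : (3:ℝ) ≤ k := by exact_mod_cast hk3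
    split_ifs <;> linarith
  have hnn : (t + 1) * (s + 1) + 1 ≤ n := by
    have : ((t:ℝ) + 1) * (s + 1) + 1 ≤ n := by linarith
    exact_mod_cast this
  have hex : (t + 1) * (s + 1) = t * s + t + 1 + s := by ring
  obtain ⟨N, hN⟩ : ∃ N, n = N + t + 1 + s := ⟨n - (t + 1 + s), by omega⟩
  have hts : t * s ≤ N := by omega
  have hNr : (n:ℝ) = N + t + 1 + s := by rw [hN]; push_cast; ring
  have hkt : k - t = s := by omega
  rw [hNr] at h
  refine ⟨N, hN, hts, ?_⟩
  by_cases h1 : t = 1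
  · subst h1
    simp only [eta, if_true] at h
    have hl : Real.log ((s:ℝ) + 1) = Real.log k := by rw [hkr]; congr 1; push_cast; ring
    push_cast at h hkr
    refine ⟨?_, hnn, Or.inr ?_⟩
    · have : 2 * (s:ℝ) + 1 ≤ N := by nlinarith
      exact_mod_cast this
    · rw [hl]; nlinarith
  · by_cases h2 : t = 2
    · subst h2
      by_cases h3 : 3 ≤ s
      · have he : eta k 2 = 12 * Real.log k := by simp [eta, hkt, h3]
        rw [he] at h
        push_cast at h hkr
        have hl : Real.log ((s:ℝ) + 1) ≤ Real.log k := by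
          apply Real.log_le_log (by linarith); rw [hkr]; linarith
        refine ⟨?_, hnn, Or.inr ?_⟩
        · have : 2 * (s:ℝ) + 1 ≤ N := by nlinarith
          exact_mod_cast this
        · nlinarith
      · have hs2 : s = 2 := by omega
        subst hs2
        have he : eta k 2 = 31 := by simp [eta, hkt]
        rw [he] at h
        push_cast at h
        have h4 : (31:ℝ) ≤ N := by linarith
        have h5 : 31 ≤ N := by exact_mod_cast h4
        exact ⟨by omega, hnn, Or.inl (by omega)⟩
    · have h3s : 3 * s ≤ t * s := Nat.mul_le_mul_right s (by omega)
      exact ⟨by omega, hnn, Or.inl (by omega)⟩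

lemma gap_s1 {n t D : ℕ} (hn : 20 * (t + 1) ≤ n) (hD : 2 * D ≤ n) :
    t * (n - (t + 2)).choose 0 + D ≤ (n - (t + 2)).choose 1 := by
  rw [Nat.choose_zero_right, Nat.choose_one_right]
  omega

lemma gap_u1 {n t s N D : ℕ} (hN : n = N + t + 1 + s) (hs : 2 ≤ s) 
    (hnn : (t + 1) * (s + 1) + 1 ≤ n) (hD : s * D ≤ (n - (t + 2)).choose (s - 1)) :
    t * (n - (t + 2)).choose (s - 1) + D ≤ (n - (t + 2)).choose s := by
  obtain ⟨P, hP⟩ : ∃ P, n - (t + 2) = P := ⟨_, rfl⟩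
  rw [hP] at hD ⊢
  have h := Nat.choose_succ_right_eq P (s - 1)
  rw [show s - 1 + 1 = s by omega] at h
  have hex : (t + 1) * (s + 1) = t * s + t + 1 + s := by ring
  have h1 : t * s + 1 ≤ P - (s - 1) := by omega
  apply Nat.le_of_mul_le_mul_right _ (show 0 < s by omega)
  rw [h]
  calc (t * P.choose (s - 1) + D) * s = P.choose (s - 1) * (t * s) + s * D := by ring
    _ ≤ P.choose (s - 1) * (t * s) + P.choose (s - 1) := Nat.add_le_add_left hD _
    _ = P.choose (s - 1) * (t * s + 1) := by ring
    _ ≤ _ := Nat.mul_le_mul_left _ h1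

lemma gap_u2 {n t s N D u : ℕ} (hN : n = N + t + 1 + s) (hu : 2 ≤ u) (hus : u ≤ s)
    (hts : t * s ≤ N) (h2s : 2 * s ≤ N) (hD : 2 * D ≤ N.choose s) :
    t * (n - (t + 1 + u)).choose (s - u) + D ≤ (n - (t + 1 + u)).choose s := by
  obtain ⟨M, hM⟩ : ∃ M, n - (t + 1 + u) = M := ⟨_, rfl⟩
  rw [hM]
  have hMN : M = N + (s - u) := by omega
  have h1 : 2 * t * s.choose u ≤ N.choose u := by
    obtain ⟨r, hr1, hr2, hr3⟩ : ∃ r, 2 ≤ r ∧ t ≤ r ∧ r * s ≤ N := by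
      rcases Nat.le_total 2 t with h | h
      · exact ⟨t, h, le_rfl, hts⟩
      · exact ⟨2, le_rfl, h, h2s⟩
    have h3 : 2 * t ≤ r ^ u := by
      calc 2 * t ≤ r * r := Nat.mul_le_mul hr1 hr2
        _ = r ^ 2 := by ring
        _ ≤ r ^ u := Nat.pow_le_pow_right (by omega) hu
    calc 2 * t * s.choose u ≤ r ^ u * s.choose u := Nat.mul_le_mul_right _ h3
      _ ≤ (r * s).choose u := pow_choose_le r s u
      _ ≤ _ := Nat.choose_le_choose _ hr3
  have h2 := Nat.choose_mul (n := M) (k := s) (s := s - u) (by omega)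
  rw [show M - (s - u) = N by omega, show s - (s - u) = u by omega,
    Nat.choose_symm hus] at h2
  have h3 : 2 * t * M.choose (s - u) ≤ M.choose s := by
    apply Nat.le_of_mul_le_mul_right _ (Nat.choose_pos hus)
    rw [h2]
    calc 2 * t * M.choose (s - u) * s.choose u = M.choose (s - u) * (2 * t * s.choose u) := by ring
      _ ≤ _ := Nat.mul_le_mul_left _ h1
  have h4 : N.choose s ≤ M.choose s := Nat.choose_le_choose _ (by omega)
  have h5 : 2 * t * M.choose (s - u) = 2 * (t * M.choose (s - u)) := by ring
  omega

theorem gap_thm : ∃ n1 : ℕ, ∀ n, n1 ≤ n → ∀ k t s : ℕ, k = t + s → 3 ≤ k → 1 ≤ t → 1 ≤ s →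
    ((t + 1 : ℝ) * (k - t + 1 : ℝ) + eta k t ≤ (n : ℝ)) →
    (t + 1) * (s + 1) + 1 ≤ n ∧ n ≤ 2 * (n - t - 1) + 2 ∧ ∀ m, t + 2 ≤ m → m ≤ k + 1 →
      t * (n - m).choose (k + 1 - m) + 16 * s * 4 ^ s * Nat.size (n + 1) ≤ (n - m).choose s := by
  obtain ⟨K, hK1, hK2⟩ := exists_K2
  obtain ⟨n1, hn1⟩ := size_small (2 * K + 130)
  refine ⟨n1, fun n hn k t s hk hk3 ht hs h => ?_⟩
  have hl := hn1 n hn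
  obtain ⟨l, hl'⟩ : ∃ l, Nat.size (n + 1) = l := ⟨_, rfl⟩
  rw [hl'] at hl ⊢
  have hl1 : 1 ≤ l := by rw [← hl', Nat.succ_le_iff, Nat.size_pos]; omega
  by_cases hs1 : s = 1
  · subst hs1
    have he : eta k t = 18 * (k:ℝ) := by
      unfold eta
      rw [if_neg (by omega), if_neg (by omega), if_neg (by omega), if_neg (by omega)]
    have hkr : (k : ℝ) = t + 1 := by rw [hk]; push_cast; ring
    rw [he, hkr] at h
    have h20 : 20 * (t + 1) ≤ n := by
      have : 20 * ((t:ℝ) + 1) ≤ n := by linarith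
      exact_mod_cast this
    refine ⟨by omega, by omega, fun m hm1 hm2 => ?_⟩
    have hm : m = t + 2 := by omega
    subst hm
    rw [show k + 1 - (t + 2) = 0 by omega]
    apply gap_s1 h20
    nlinarith
  · obtain ⟨N, hN, hts, h2s, hnn, hor⟩ := cond_of_hyp hk ht (by omega) h
    have h0 : t + s ≤ t * s + 1 := by
      obtain ⟨t', rfl⟩ : ∃ t', t = t' + 1 := ⟨t - 1, by omega⟩
      obtain ⟨s', rfl⟩ : ∃ t', s = t' + 1 := ⟨s - 1, by omega⟩
      nlinarith
    have hKN : K * l ≤ N := by nlinarith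
    refine ⟨hnn, by omega, fun m hm1 hm2 => ?_⟩
    obtain ⟨u, rfl⟩ : ∃ u, m = t + 1 + u := ⟨m - (t + 1), by omega⟩
    rw [show k + 1 - (t + 1 + u) = s - u by omega]
    by_cases hu : u = 1
    · subst hu
      apply gap_u1 hN (by omega) hnn
      have := hK1 s (n - (t + 2)) l (by omega) (by omega) (by omega)
      calc s * (16 * s * 4 ^ s * l) = 16 * s ^ 2 * 4 ^ s * l := by ring
        _ ≤ _ := this
    · apply gap_u2 hN (by omega) (by omega) hts (by omega)
      have := hK2 s N l (by omega) (by omega) hor hKN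
      calc 2 * (16 * s * 4 ^ s * l) = 32 * s * 4 ^ s * l := by ring
        _ ≤ _ := this

end

section
open Finset

section
variable {n k t s : ℕ}

/-- the full star of `S` -/
def star0 (n k : ℕ) (S : Finset (Fin n)) : Finset (Finset (Fin n)) :=
  (powersetCard k univ).filter (fun A => S ⊆ A)

lemma mem_star0 {S A : Finset (Fin n)} : A ∈ star0 n k S ↔ A.card = k ∧ S ⊆ A := by
  simp [star0, mem_powersetCard]

lemma card_star0 (S : Finset (Fin n)) (hS : S.card ≤ k) :
    (star0 n k S).card = (n - S.card).choose (k - S.card) := by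
  have := count_between (k := k) S ∅ (disjoint_empty_right _) hS
  simpa [star0] using this

lemma le_choose {P s : ℕ} (hs : 1 ≤ s) (h : s + 1 ≤ P) : P ≤ P.choose s := by
  have := choose_ratio hs (show 1 ≤ s + 1 by omega) h
  rw [Nat.choose_succ_self_right, mul_comm] at this
  exact Nat.le_of_mul_le_mul_right this (by omega)

open Classical in
theorem nt_small (hk : k = t + s) (ht : 1 ≤ t) (hs : 1 ≤ s) (hnn : (t + 1) * (s + 1) + 1 ≤ n)
    (hgap : ∀ m, t + 2 ≤ m → m ≤ k + 1 →
      t * (n - m).choose (k + 1 - m) + 16 * s * 4 ^ s * Nat.size (n + 1) ≤ (n - m).choose s) :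
    (univ.filter (fun H => NT n k t H)).card * (n + 1) ≤ n.choose t * 2 ^ ((n - t).choose s) := by
  have hts : s ≤ t * s := Nat.le_mul_of_pos_left s ht
  have hn : 2 * k + 1 ≤ n + t := by nlinarith
  have hkn : k ≤ n := by nlinarith
  set D := 16 * s * 4 ^ s * Nat.size (n + 1) with hD
  have hF : ∀ F, NT n k t F → F.card + D ≤ (n - t).choose s := by
    intro F hF
    obtain ⟨m, h1, h2, h3⟩ := nt_bound hk ht hs hnn hF
    have := hgap m h1 h2
    omega
  rcases (univ.filter (fun H => NT n k t H)).eq_empty_or_nonempty with he | ⟨F0, hF0⟩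
  · rw [he, card_empty, zero_mul]; exact Nat.zero_le _
  · have hDle := hF F0 (mem_filter.mp hF0).2
    have hc := count_nt hk ht hs hkn hn ((n - t).choose s - D) (fun F h => by have := hF F h; omega)
    set b := (2 * s + 2).choose (s + 1) with hb
    have hb1 : b ≤ 4 ^ (s + 1) := by
      have := Nat.choose_le_two_pow (2 * s + 2) (s + 1)
      rwa [show 2 * s + 2 = 2 * (s + 1) by ring, pow_mul] at this
    have hb2 : 1 ≤ b := Nat.choose_pos (by omega)
    have hexp : (s + 2 * s * b + 1) ≤ 16 * s * 4 ^ s := by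
      have h1 : s * b ≤ s * 4 ^ (s + 1) := Nat.mul_le_mul_left _ hb1
      have h2 : s * 4 ^ (s + 1) = 4 * (s * 4 ^ s) := by ring
      have h3 : s ≤ s * b := Nat.le_mul_of_pos_right _ hb2
      have h4 : 2 * s * b = 2 * (s * b) := by ring
      have h5 : 16 * s * 4 ^ s = 16 * (s * 4 ^ s) := by ring
      omega
    have hsz : n + 1 ≤ 2 ^ Nat.size (n + 1) := (Nat.lt_size_self (n + 1)).le
    calc (univ.filter (fun H => NT n k t H)).card * (n + 1)
        ≤ n.choose t * (n + 1) ^ (s + 2 * s * b) * 2 ^ ((n - t).choose s - D) * (n + 1) :=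
          Nat.mul_le_mul_right _ hc
      _ = n.choose t * ((n + 1) ^ (s + 2 * s * b + 1) * 2 ^ ((n - t).choose s - D)) := by ring
      _ ≤ n.choose t * (2 ^ D * 2 ^ ((n - t).choose s - D)) := by
          apply Nat.mul_le_mul_left
          apply Nat.mul_le_mul_right
          calc (n + 1) ^ (s + 2 * s * b + 1) ≤ (2 ^ Nat.size (n + 1)) ^ (s + 2 * s * b + 1) :=
                Nat.pow_le_pow_left hsz _
            _ = 2 ^ ((s + 2 * s * b + 1) * Nat.size (n + 1)) := by rw [← pow_mul, mul_comm]
            _ ≤ 2 ^ D := Nat.pow_le_pow_right (by norm_num) (Nat.mul_le_mul_right _ hexp)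
      _ = n.choose t * 2 ^ ((n - t).choose s) := by
          rw [← pow_add]; congr 2; omega

open Classical in
theorem total_upper (hk : k = t + s) :
    (univ.filter (fun H => IsKUniform n k H ∧ IsTIntersectingHyp n t H)).card ≤
      (univ.filter (fun H => NT n k t H)).card + n.choose t * 2 ^ ((n - t).choose s) := by
  have hsub : univ.filter (fun H => IsKUniform n k H ∧ IsTIntersectingHyp n t H) ⊆
      univ.filter (fun H => NT n k t H) ∪
        (powersetCard t (univ : Finset (Fin n))).biUnion (fun S => (star0 n k S).powerset) := by
    intro H hH
    simp only [mem_filter, mem_univ, true_and] at hH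
    rw [mem_union]
    by_cases hT : IsTrivialHyp n t H
    · right
      obtain ⟨S, hS, hSH⟩ := hT
      rw [mem_biUnion]
      refine ⟨S, mem_powersetCard.mpr ⟨subset_univ _, hS⟩, mem_powerset.mpr fun e he => ?_⟩
      exact mem_star0.mpr ⟨hH.1 e he, hSH e he⟩
    · left
      exact mem_filter.mpr ⟨mem_univ _, hH.1, hH.2, hT⟩
  refine (card_le_card hsub).trans ((card_union_le _ _).trans (Nat.add_le_add_left ?_ _))
  have := card_biUnion_le_card_mul (powersetCard t (univ : Finset (Fin n)))
    (fun S => (star0 n k S).powerset) (2 ^ ((n - t).choose s)) (by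
      intro S hS
      have hc := (mem_powersetCard.mp hS).2
      rw [card_powerset, card_star0 S (by omega), hc, show k - t = s by omega])
  rwa [card_powersetCard, card_univ, Fintype.card_fin] at this

open Classical in
theorem total_lower (hk : k = t + s) (hs : 1 ≤ s) :
    n.choose t * 2 ^ ((n - t).choose s) ≤
      (univ.filter (fun H => IsKUniform n k H ∧ IsTIntersectingHyp n t H)).card +
        n.choose t * (n * 2 ^ ((n - (t + 1)).choose (s - 1))) := by
  let good : Finset (Fin n) → Finset (Finset (Finset (Fin n))) := fun S =>
    (star0 n k S).powerset.filter (fun H => ∀ S' : Finset (Fin n), S'.card = t →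
      (∀ e ∈ H, S' ⊆ e) → S' = S)
  have hdis : ∀ S ∈ powersetCard t (univ : Finset (Fin n)),
      ∀ S' ∈ powersetCard t (univ : Finset (Fin n)), S ≠ S' → Disjoint (good S) (good S') := by
    intro S hS S' hS' hne
    rw [disjoint_left]
    intro H h1 h2
    simp only [good, mem_filter, mem_powerset] at h1 h2
    exact hne (h2.2 S (mem_powersetCard.mp hS).2 (fun e he => (mem_star0.mp (h1.1 he)).2))
  have hsub : (powersetCard t (univ : Finset (Fin n))).biUnion good ⊆
      univ.filter (fun H => IsKUniform n k H ∧ IsTIntersectingHyp n t H) := by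
    intro H hH
    rw [mem_biUnion] at hH
    obtain ⟨S, hS, hH⟩ := hH
    simp only [good, mem_filter, mem_powerset] at hH
    refine mem_filter.mpr ⟨mem_univ _, fun e he => (mem_star0.mp (hH.1 he)).1, fun e he f hf => ?_⟩
    rw [← (mem_powersetCard.mp hS).2]
    exact card_le_card (subset_inter (mem_star0.mp (hH.1 he)).2 (mem_star0.mp (hH.1 hf)).2)
  have hgood : ∀ S ∈ powersetCard t (univ : Finset (Fin n)),
      2 ^ ((n - t).choose s) ≤ (good S).card + n * 2 ^ ((n - (t + 1)).choose (s - 1)) := by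
    intro S hS
    have hc := (mem_powersetCard.mp hS).2
    have h1 : (star0 n k S).powerset.card = 2 ^ ((n - t).choose s) := by
      rw [card_powerset, card_star0 S (by omega), hc, show k - t = s by omega]
    rw [← h1]
    have hsub2 : (star0 n k S).powerset ⊆ good S ∪
        (univ \ S).biUnion (fun x => (star0 n k (insert x S)).powerset) := by
      intro H hH
      rw [mem_union]
      by_cases hg : H ∈ good S
      · exact Or.inl hg
      · right
        simp only [good, mem_filter, not_and] at hg
        have hg := hg hH
        push Not at hg
        obtain ⟨S', h2, h3, h4⟩ := hg
        have : ¬ S' ⊆ S := fun h => h4 (eq_of_subset_of_card_le h (by omega))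
        obtain ⟨x, hx, hxS⟩ := not_subset.mp this
        rw [mem_biUnion]
        refine ⟨x, mem_sdiff.mpr ⟨mem_univ _, hxS⟩, mem_powerset.mpr fun e he => ?_⟩
        rw [mem_powerset] at hH
        have := mem_star0.mp (hH he)
        exact mem_star0.mpr ⟨this.1, insert_subset (h3 e he hx) this.2⟩
    refine (card_le_card hsub2).trans ((card_union_le _ _).trans (Nat.add_le_add_left ?_ _))
    have := card_biUnion_le_card_mul (univ \ S)
      (fun x => (star0 n k (insert x S)).powerset) (2 ^ ((n - (t + 1)).choose (s - 1))) (by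
        intro x hx
        have hxS := (mem_sdiff.mp hx).2
        have hci := card_insert_of_notMem hxS
        rw [card_powerset, card_star0 (insert x S) (by omega), hci, hc,
          show k - (t + 1) = s - 1 by omega])
    refine this.trans (Nat.mul_le_mul_right _ ?_)
    refine (card_le_card (subset_univ _)).trans ?_
    rw [card_univ, Fintype.card_fin]
  have h5 := card_le_card hsub
  rw [card_biUnion hdis] at h5
  have h6 := sum_le_sum hgood
  rw [sum_const, sum_add_distrib, sum_const, card_powersetCard, card_univ, Fintype.card_fin,
    smul_eq_mul, smul_eq_mul] at h6
  omega

theorem bad_small (hs : 1 ≤ s) (hnn : (t + 1) * (s + 1) + 1 ≤ n)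
    (hn2 : n ≤ 2 * (n - t - 1) + 2) (hsz : 8 * Nat.size (n + 1) ≤ n) :
    n * 2 ^ ((n - (t + 1)).choose (s - 1)) * (n + 1) ≤ 2 ^ ((n - t).choose s) := by
  have hex : (t + 1) * (s + 1) = t * s + t + 1 + s := by ring
  obtain ⟨P, hP⟩ : ∃ P, n - (t + 1) = P := ⟨_, rfl⟩
  have hl1 : 1 ≤ Nat.size (n + 1) := by rw [Nat.succ_le_iff, Nat.size_pos]; omega
  have h1 : P ≤ P.choose s := le_choose hs (by omega)
  have h2 : (n - t).choose s = P.choose (s - 1) + P.choose s := by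
    rw [show n - t = P + 1 by omega]
    obtain ⟨s', rfl⟩ : ∃ s', s = s' + 1 := ⟨s - 1, by omega⟩
    rw [Nat.choose_succ_succ, Nat.add_sub_cancel]
  have hl : n + 1 ≤ 2 ^ Nat.size (n + 1) := (Nat.lt_size_self (n + 1)).le
  rw [hP, h2, pow_add]
  calc n * 2 ^ P.choose (s - 1) * (n + 1) = 2 ^ P.choose (s - 1) * (n * (n + 1)) := by ring
    _ ≤ 2 ^ P.choose (s - 1) * (2 ^ Nat.size (n + 1) * 2 ^ Nat.size (n + 1)) :=
      Nat.mul_le_mul_left _ (Nat.mul_le_mul (by omega) hl)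
    _ = 2 ^ P.choose (s - 1) * 2 ^ (Nat.size (n + 1) + Nat.size (n + 1)) := by rw [← pow_add]
    _ ≤ _ := Nat.mul_le_mul_left _ (Nat.pow_le_pow_right (by norm_num) (by omega))
end

theorem typical_structure_of_t_intersecting_hypergraphs (ε : ℝ) (hε : 0 < ε) :
    ∃ n₀ : ℕ, ∀ n : ℕ, n₀ ≤ n → ∀ k t : ℕ, 3 ≤ k → 1 ≤ t → t < k →
      ((t + 1 : ℝ) * (k - t + 1 : ℝ) + eta k t ≤ (n : ℝ)) →
      (Nat.card {H : Finset (Finset (Fin n)) //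
          IsKUniform n k H ∧ IsTIntersectingHyp n t H ∧ ¬ IsTrivialHyp n t H} : ℝ) ≤
        ε * (n.choose t : ℝ) * (2 : ℝ) ^ ((n - t).choose (k - t)) ∧
      (1 - ε) * (n.choose t : ℝ) * (2 : ℝ) ^ ((n - t).choose (k - t)) ≤
        (Nat.card {H : Finset (Finset (Fin n)) //
          IsKUniform n k H ∧ IsTIntersectingHyp n t H} : ℝ) ∧
      (Nat.card {H : Finset (Finset (Fin n)) //
          IsKUniform n k H ∧ IsTIntersectingHyp n t H} : ℝ) ≤
        (1 + ε) * (n.choose t : ℝ) * (2 : ℝ) ^ ((n - t).choose (k - t)) := by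
  classical
  obtain ⟨n1, hn1⟩ := gap_thm
  obtain ⟨n2, hn2⟩ := size_small 8
  obtain ⟨n3, hn3⟩ := exists_nat_gt (1 / ε)
  refine ⟨n1 + n2 + n3, fun n hn k t hk3 ht htk h => ?_⟩
  obtain ⟨s, hk⟩ : ∃ s, k = t + s := ⟨k - t, by omega⟩
  have hs : 1 ≤ s := by omega
  obtain ⟨hnn, hnt, hgap⟩ := hn1 n (by omega) k t s hk hk3 ht hs h
  have hsz := hn2 n (by omega)
  have hε1 : 1 ≤ ε * ((n : ℝ) + 1) := by
    have h1 : (n3 : ℝ) ≤ n := by exact_mod_cast (by omega : n3 ≤ n)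
    rw [div_lt_iff₀ hε] at hn3
    nlinarith
  have hpos : (0 : ℝ) < (n : ℝ) + 1 := by positivity
  have e1 : Nat.card {H : Finset (Finset (Fin n)) //
      IsKUniform n k H ∧ IsTIntersectingHyp n t H ∧ ¬ IsTrivialHyp n t H} =
      (univ.filter (fun H => NT n k t H)).card := by
    rw [Nat.card_eq_fintype_card, Fintype.card_subtype]
    apply congrArg Finset.card; ext H; rw [mem_filter, mem_filter]; exact Iff.rfl
  have e2 : Nat.card {H : Finset (Finset (Fin n)) //
      IsKUniform n k H ∧ IsTIntersectingHyp n t H} =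
      (univ.filter (fun H : Finset (Finset (Fin n)) =>
        IsKUniform n k H ∧ IsTIntersectingHyp n t H)).card := by
    rw [Nat.card_eq_fintype_card, Fintype.card_subtype]
  rw [e1, e2, show k - t = s by omega]
  have a1 := nt_small hk ht hs hnn hgap
  have a2 := total_upper (n := n) hk
  have a3 := total_lower (n := n) hk hs
  have a4 := bad_small hs hnn hnt hsz
  set x := (univ.filter (fun H => NT n k t H)).card
  set y := (univ.filter (fun H : Finset (Finset (Fin n)) =>
        IsKUniform n k H ∧ IsTIntersectingHyp n t H)).card
  have b1 : (x : ℝ) * (n + 1) ≤ n.choose t * 2 ^ ((n - t).choose s) := by exact_mod_cast a1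
  have b2 : (y : ℝ) ≤ x + n.choose t * 2 ^ ((n - t).choose s) := by exact_mod_cast a2
  have b3 : (n.choose t : ℝ) * 2 ^ ((n - t).choose s) ≤
      y + n.choose t * (n * 2 ^ ((n - (t + 1)).choose (s - 1))) := by exact_mod_cast a3
  have b4 : (n : ℝ) * 2 ^ ((n - (t + 1)).choose (s - 1)) * (n + 1) ≤ 2 ^ ((n - t).choose s) := by
    exact_mod_cast a4
  set w : ℝ := n * 2 ^ ((n - (t + 1)).choose (s - 1))
  set z : ℝ := 2 ^ ((n - t).choose s)
  set C : ℝ := (n.choose t : ℝ)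
  have hC : 0 ≤ C := Nat.cast_nonneg _
  have key : ∀ u v : ℝ, 0 ≤ v → u * (n + 1) ≤ v → u ≤ ε * v := by
    intro u v hv huv
    rcases le_or_gt u 0 with hu | hu
    · exact hu.trans (by positivity)
    · calc u = u * 1 := by ring
        _ ≤ u * (ε * (n + 1)) := mul_le_mul_of_nonneg_left hε1 hu.le
        _ = ε * (u * (n + 1)) := by ring
        _ ≤ ε * v := mul_le_mul_of_nonneg_left huv hε.le
  have hz : 0 ≤ z := by positivity
  have c1 := key x (C * z) (by positivity) b1
  have c2 := mul_le_mul_of_nonneg_left (key w z hz b4) hC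
  refine ⟨by linarith, by nlinarith, by nlinarith⟩

end
end

section
/- Let I(n,k) denote the number of intersecting k-uniform hypergraphs on [n]. Then for all integers k ≥ 3 and n ≥ 2k+1 one has log I(n,k) ≥ binom(n−1,k−1), and for every ε > 0 there exists n₀ such that log I(n,k) ≤ (1+ε)·binom(n−1,k−1) for all n ≥ n₀ and all integers k with 3 ≤ k ≤ (n−1)/2. -/
/-- A hypergraph is intersecting if any two of its edges have nonempty intersection. -/
def IsIntersectingHyp (n : ℕ) (H : Finset (Finset (Fin n))) : Prop :=
  ∀ e ∈ H, ∀ f ∈ H, (e ∩ f).Nonempty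

/-- `numIntersecting n k` is the number `I(n,k)` of intersecting `k`-uniform
hypergraphs on `[n]`. -/
noncomputable def numIntersecting (n k : ℕ) : ℕ :=
  Nat.card {H : Finset (Finset (Fin n)) // IsKUniform n k H ∧ IsIntersectingHyp n H}

open Finset in
lemma container_count {α : Type*} [DecidableEq α] (R : α → α → Prop) [DecidableRel R]
    (β M : ℝ) (hβ : 1 < β) (V : Finset α)
    (hV : ∀ S ⊆ V, M < (#S : ℝ) → ∃ v ∈ S, ¬ R v v ∧
      1 ≤ (β - 1) * β ^ #(S.filter (fun u => R v u))) :
    ∀ m : ℕ, ∀ S ⊆ V, #S = m →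
      ((#(S.powerset.filter (fun T => ∀ x ∈ T, ∀ y ∈ T, ¬ R x y)) : ℕ) : ℝ)
        ≤ (2:ℝ) ^ M * β ^ m := by
  have h2 : (0:ℝ) < (2:ℝ) ^ M := Real.rpow_pos_of_pos (by norm_num) M
  intro m
  induction m using Nat.strong_induction_on with
  | _ m ih =>
  intro S hS hm
  by_cases hM : M < (#S : ℝ)
  · obtain ⟨v, hv, hvv, hd⟩ := hV S hS hM
    set Nb := S.filter (fun u => R v u) with hNb
    have hvN : v ∉ Nb := by simp [hNb, hvv]
    have hNS : Nb ⊆ S.erase v := fun x hx => by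
      rw [mem_erase]
      exact ⟨fun h => hvN (h ▸ hx), (mem_filter.1 hx).1⟩
    have hpos : 0 < #S := card_pos.2 ⟨v, hv⟩
    have hc1 : #(S.erase v) = m - 1 := by rw [card_erase_of_mem hv, hm]
    have hc2 : #((S.erase v) \ Nb) = m - 1 - #Nb := by
      rw [card_sdiff_of_subset hNS, hc1]
    have hle : #Nb ≤ m - 1 := hc1 ▸ card_le_card hNS
    have i1 := ih (m-1) (by omega) (S.erase v) ((erase_subset _ _).trans hS) hc1
    have i2 := ih (m-1-#Nb) (by omega) ((S.erase v) \ Nb)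
      (sdiff_subset.trans ((erase_subset _ _).trans hS)) hc2
    have hcard : #(S.powerset.filter (fun T => ∀ x ∈ T, ∀ y ∈ T, ¬ R x y)) ≤
        #((S.erase v).powerset.filter (fun T => ∀ x ∈ T, ∀ y ∈ T, ¬ R x y)) +
        #(((S.erase v) \ Nb).powerset.filter (fun T => ∀ x ∈ T, ∀ y ∈ T, ¬ R x y)) := by
      rw [← card_filter_add_card_filter_not
        (s := S.powerset.filter (fun T => ∀ x ∈ T, ∀ y ∈ T, ¬ R x y)) (fun T => v ∉ T)]
      apply Nat.add_le_add
      · apply card_le_card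
        intro T hT
        simp only [mem_filter, mem_powerset] at hT ⊢
        refine ⟨fun x hx => mem_erase.2 ⟨fun h => hT.2 (h ▸ hx), hT.1.1 hx⟩, hT.1.2⟩
      · apply card_le_card_of_injOn (fun T => T.erase v)
        · intro T hT
          simp only [coe_filter, mem_filter, mem_powerset, Set.mem_ofPred_eq, not_not] at hT ⊢
          refine ⟨fun x hx => ?_, fun x hx y hy => hT.1.2 x (mem_erase.1 hx).2 y (mem_erase.1 hy).2⟩
          have hx' := mem_erase.1 hx
          rw [mem_sdiff, mem_erase]
          refine ⟨⟨hx'.1, hT.1.1 hx'.2⟩, fun h => ?_⟩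
          exact hT.1.2 v hT.2 x hx'.2 (mem_filter.1 h).2
        · intro T hT T' hT' h
          simp only [coe_filter, mem_filter, mem_powerset, Set.mem_ofPred_eq, not_not] at hT hT'
          have h' : T.erase v = T'.erase v := h
          rw [← insert_erase hT.2, ← insert_erase hT'.2, h']
    have hcard' : ((#(S.powerset.filter (fun T => ∀ x ∈ T, ∀ y ∈ T, ¬ R x y)) : ℕ) : ℝ) ≤ _ :=
      Nat.cast_le.2 hcard
    rw [Nat.cast_add] at hcard'
    refine hcard'.trans ((add_le_add i1 i2).trans ?_)
    rw [← mul_add]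
    apply mul_le_mul_of_nonneg_left _ h2.le
    have e1 : β ^ (m-1) = β ^ (m-1-#Nb) * β ^ #Nb := by
      rw [← pow_add]; congr 1; omega
    have e2 : β ^ m = β ^ (m-1) * β := by
      rw [← pow_succ]; congr 1; omega
    have hp : 0 < β ^ (m-1-#Nb) := by positivity
    rw [e2]
    have : β ^ (m-1-#Nb) ≤ β ^ (m-1) * (β - 1) := by
      rw [e1]; nlinarith
    linarith
  · have h1 : #(S.powerset.filter (fun T => ∀ x ∈ T, ∀ y ∈ T, ¬ R x y)) ≤ 2 ^ #S := by
      rw [← card_powerset]; exact card_filter_le _ _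
    have h1' : ((#(S.powerset.filter (fun T => ∀ x ∈ T, ∀ y ∈ T, ¬ R x y)) : ℕ) : ℝ) ≤ 2 ^ #S := by
      exact_mod_cast h1
    have h3 : (2:ℝ) ^ #S ≤ (2:ℝ) ^ M := by
      rw [← Real.rpow_natCast]
      exact Real.rpow_le_rpow_of_exponent_le (by norm_num) (not_lt.1 hM)
    have h4 : 1 ≤ β ^ m := one_le_pow₀ hβ.le
    calc _ ≤ (2:ℝ) ^ M := h1'.trans h3
      _ ≤ _ := le_mul_of_one_le_right h2.le h4

open Finset in
lemma avg_action {G Ω : Type*} [Group G] [Fintype G] [MulAction G Ω] [DecidableEq Ω]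
    (O S : Finset Ω) (hS : S ⊆ O) (hinv : ∀ g : G, ∀ a ∈ O, g • a ∈ O)
    (htr : ∀ a ∈ O, ∀ b ∈ O, ∃ g : G, g • a = b) (a : Ω) (ha : a ∈ O) :
    #O * #{g : G | g • a ∈ S} = Fintype.card G * #S := by
  have h1 : ∀ b ∈ O, #{g : G | g • b ∈ S} = #{g : G | g • a ∈ S} := by
    intro b hb
    obtain ⟨h, rfl⟩ := htr a ha b hb
    apply card_bij (fun g _ => g * h)
    · intro g hg; simpa [mul_smul] using hg
    · intro g _ g' _ e; simpa using e
    · intro g hg; exact ⟨g * h⁻¹, by simpa [← mul_smul] using hg, by simp⟩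
  have h2 : ∀ g : G, #{b ∈ O | g • b ∈ S} = #S := by
    intro g
    apply card_bij (fun b _ => g • b)
    · intro b hb; exact (mem_filter.1 hb).2
    · intro b _ b' _ e; exact smul_left_cancel g e
    · intro b hb
      exact ⟨g⁻¹ • b, by simp [hb, hinv _ _ (hS hb)], by simp⟩
  have h3 := sum_card_bipartiteAbove_eq_sum_card_bipartiteBelow (s := O) (t := (univ : Finset G))
    (fun b g => g • b ∈ S)
  simp only [bipartiteAbove, bipartiteBelow] at h3
  rw [sum_congr rfl h1, sum_congr rfl (fun g _ => h2 g)] at h3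
  simpa using h3

open Finset Pointwise in
lemma perm_trans {n : ℕ} (A B A' B' : Finset (Fin n)) (hA : #A = #A') (hB : #B = #B')
    (hd : Disjoint A B) (hd' : Disjoint A' B') :
    ∃ σ : Equiv.Perm (Fin n), σ • A = A' ∧ σ • B = B' := by
  let eA := equivOfCardEq hA
  let eB := equivOfCardEq hB
  let f : Fin n → Fin n := fun x => if h : x ∈ A then eA ⟨x, h⟩ else
    if h : x ∈ B then eB ⟨x, h⟩ else x
  have fA : ∀ x (h : x ∈ A), f x = eA ⟨x, h⟩ := fun x h => by simp [f, h]
  have fB : ∀ x (h : x ∈ B), f x = eB ⟨x, h⟩ := fun x h => by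
    have : x ∉ A := fun h' => disjoint_left.1 hd h' h
    simp [f, h, this]
  have fA' : ∀ x ∈ A, f x ∈ A' := fun x h => by rw [fA x h]; exact (eA _).2
  have fB' : ∀ x ∈ B, f x ∈ B' := fun x h => by rw [fB x h]; exact (eB _).2
  have hinj : Set.InjOn f (A ∪ B : Finset (Fin n)) := by
    intro x hx y hy e
    rw [mem_coe, mem_union] at hx hy
    rcases hx with hx | hx <;> rcases hy with hy | hy
    · rw [fA x hx, fA y hy] at e
      simpa using eA.injective (Subtype.ext e)
    · exact absurd (fB' y hy) (e ▸ disjoint_left.1 hd' (fA' x hx))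
    · exact absurd (fB' x hx) (e ▸ disjoint_left.1 hd' (fA' y hy))
    · rw [fB x hx, fB y hy] at e
      simpa using eB.injective (Subtype.ext e)
  obtain ⟨g, hg⟩ := exists_equiv_extend_of_card_eq (t := (univ : Finset (Fin n))) (by simp)
    (f := f) (s := A ∪ B) (subset_univ _) hinj
  let σ : Equiv.Perm (Fin n) := g.trans (Equiv.subtypeUnivEquiv (by simp))
  have hσ : ∀ x ∈ A ∪ B, σ x = f x := fun x hx => hg x hx
  refine ⟨σ, ?_, ?_⟩
  · apply eq_of_subset_of_card_le
    · intro y hy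
      obtain ⟨x, hx, rfl⟩ := mem_smul_finset.1 hy
      have := hσ x (mem_union_left _ hx)
      rw [Equiv.Perm.smul_def, this]; exact fA' x hx
    · simp [hA]
  · apply eq_of_subset_of_card_le
    · intro y hy
      obtain ⟨x, hx, rfl⟩ := mem_smul_finset.1 hy
      have := hσ x (mem_union_right _ hx)
      rw [Equiv.Perm.smul_def, this]; exact fB' x hx
    · simp [hB]

/-- cyclic arc -/
def cycArc (n k : ℕ) [NeZero n] (i : Fin n) : Finset (Fin n) :=
  (Finset.range k).image (fun t => i + Fin.ofNat n t)

lemma ofNat_inj_lt {n a b : ℕ} [NeZero n] (ha : a < n) (hb : b < n)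
    (h : Fin.ofNat n a = Fin.ofNat n b) : a = b := by
  have := congrArg Fin.val h
  simpa [Fin.ofNat, Nat.mod_eq_of_lt ha, Nat.mod_eq_of_lt hb] using this

lemma ofNat_add' (n a b : ℕ) [NeZero n] :
    Fin.ofNat n a + Fin.ofNat n b = Fin.ofNat n (a + b) := by
  apply Fin.ext
  simp [Fin.ofNat, Fin.val_add]

open Finset in
lemma cycArc_card (n k : ℕ) [NeZero n] (hk : k ≤ n) (i : Fin n) : #(cycArc n k i) = k := by
  rw [cycArc, card_image_of_injOn, card_range]
  intro a ha b hb h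
  simp only [coe_range, Set.mem_Iio] at ha hb
  exact ofNat_inj_lt (by omega) (by omega) (add_left_cancel h)

open Finset in
lemma cycArc_disjoint (n k d : ℕ) [NeZero n] (hk : k ≤ d) (hd : d + k ≤ n) (i : Fin n) :
    Disjoint (cycArc n k i) (cycArc n k (i + Fin.ofNat n d)) := by
  rw [disjoint_left]
  intro x hx hy
  simp only [cycArc, mem_image, mem_range] at hx hy
  obtain ⟨a, ha, rfl⟩ := hx
  obtain ⟨b, hb, h⟩ := hy
  rw [add_assoc, ofNat_add'] at h
  have := ofNat_inj_lt (by omega) (by omega) (add_left_cancel h)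
  omega

open Finset in
lemma circle_supersat (n k : ℕ) [NeZero n] (hk : 1 ≤ k) (hn : 2 * k ≤ n) (X : Finset (Fin n)) :
    #X ≤ k + #((univ ×ˢ Icc k (n - k) : Finset (Fin n × ℕ)).filter
      (fun p => p.1 ∈ X ∧ p.1 + Fin.ofNat n p.2 ∈ X)) := by
  rcases X.eq_empty_or_nonempty with rfl | ⟨i, hi⟩
  · simp
  set Y := (range n).filter (fun d => i + Fin.ofNat n d ∈ X) with hY
  have hXY : #X ≤ #Y := by
    apply card_le_card_of_surjOn (fun d => i + Fin.ofNat n d)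
    intro x hx
    refine ⟨(x - i).val, ?_, ?_⟩
    · simp [hY, (x-i).2]
      simpa using hx
    · simp
  set L := Y.filter (fun d => d < k)
  set Mi := Y.filter (fun d => k ≤ d ∧ d ≤ n - k)
  set H := (range k).filter (fun e => 1 ≤ e ∧ e + (n - k) ∈ Y)
  have hYle : #Y ≤ #L + #Mi + #H := by
    have : Y ⊆ L ∪ Mi ∪ H.image (fun e => e + (n-k)) := by
      intro d hd
      have hdn : d < n := by simpa using (mem_filter.1 hd).1
      simp only [mem_union, mem_image, L, Mi, H, mem_filter, mem_range]
      by_cases h1 : d < k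
      · exact Or.inl (Or.inl ⟨hd, h1⟩)
      by_cases h2 : d ≤ n - k
      · exact Or.inl (Or.inr ⟨hd, by omega, h2⟩)
      · have e : d - (n-k) + (n-k) = d := by omega
        exact Or.inr ⟨d - (n-k), ⟨by omega, by omega, by rwa [e]⟩, e⟩
    calc #Y ≤ _ := card_le_card this
      _ ≤ _ := (card_union_le _ _).trans (Nat.add_le_add (card_union_le _ _) card_image_le)
  have hLH : #L + #H ≤ k + #(L ∩ H) := by
    rw [← card_union_add_card_inter]
    apply Nat.add_le_add_right
    calc _ ≤ #(range k) := card_le_card (by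
          intro x hx
          simp only [mem_union, L, H, mem_filter, mem_range] at hx ⊢
          omega)
      _ = k := card_range k
  have hfin : #Mi + #(L ∩ H) ≤ #((univ ×ˢ Icc k (n - k) : Finset (Fin n × ℕ)).filter
      (fun p => p.1 ∈ X ∧ p.1 + Fin.ofNat n p.2 ∈ X)) := by
    have c1 : #(Mi.image (fun d => (i, d))) = #Mi :=
      card_image_of_injective _ (fun a b h => by simpa using h)
    have c2 : #((L ∩ H).image (fun e => (i + Fin.ofNat n e, n - k))) = #(L ∩ H) := by
      apply card_image_of_injOn
      intro a ha b hb h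
      simp only [coe_inter, Set.mem_inter_iff, mem_coe, L, H, mem_filter, mem_range] at ha hb
      simp only [Prod.mk.injEq, and_true] at h
      exact ofNat_inj_lt (by omega) (by omega) (add_left_cancel h)
    rw [← c1, ← c2, ← card_union_of_disjoint]
    · apply card_le_card
      intro p hp
      simp only [mem_union, mem_image, mem_inter, L, H, Mi, mem_filter, mem_range, hY] at hp
      simp only [mem_filter, mem_product, mem_univ, true_and, mem_Icc]
      rcases hp with ⟨d, hd, rfl⟩ | ⟨e, he, rfl⟩
      · exact ⟨hd.2, hi, hd.1.2⟩
      · refine ⟨⟨by omega, le_refl _⟩, he.1.1.2, ?_⟩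
        rw [add_assoc, ofNat_add']
        exact he.2.2.2.2
    · rw [disjoint_left]
      intro p hp hq
      simp only [mem_image, mem_inter, L, H, mem_filter, mem_range] at hp hq
      obtain ⟨d, hd, rfl⟩ := hp
      obtain ⟨e, he, h⟩ := hq
      simp only [Prod.mk.injEq] at h
      have h1 : Fin.ofNat n e = Fin.ofNat n 0 := by
        have : i + Fin.ofNat n e = i + 0 := by rw [h.1, add_zero]
        simpa using add_left_cancel this
      have := ofNat_inj_lt (by omega) (by omega) h1
      omega
  omega

open Finset in
lemma card_disj_pairs (n k : ℕ) :
    #(((powersetCard k (univ : Finset (Fin n))) ×ˢ (powersetCard k (univ : Finset (Fin n)))).filter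
      (fun p => Disjoint p.1 p.2)) = n.choose k * (n - k).choose k := by
  rw [card_filter, sum_product]
  have : ∀ A ∈ powersetCard k (univ : Finset (Fin n)),
      (∑ B ∈ powersetCard k (univ : Finset (Fin n)), if Disjoint A B then 1 else 0)
        = (n - k).choose k := by
    intro A hA
    rw [← card_filter]
    have e : (powersetCard k (univ : Finset (Fin n))).filter (fun B => Disjoint A B)
        = powersetCard k Aᶜ := by
      ext B
      simp only [mem_filter, mem_powersetCard, subset_univ, true_and]
      rw [subset_compl_iff_disjoint_left, and_comm]
    rw [e, card_powersetCard, card_compl, (mem_powersetCard.1 hA).2, Fintype.card_fin]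
  rw [sum_congr rfl this]
  simp

open Finset Pointwise in
lemma smul_disj {n : ℕ} (g : Equiv.Perm (Fin n)) (a b : Finset (Fin n)) (h : Disjoint a b) :
    Disjoint (g • a) (g • b) := by
  rw [disjoint_left] at h ⊢
  intro x hx hy
  obtain ⟨y, hy1, rfl⟩ := mem_smul_finset.1 hx
  obtain ⟨z, hz1, e⟩ := mem_smul_finset.1 hy
  exact h hy1 (smul_left_cancel g e ▸ hz1)

lemma nat_aux (F D N n s k r P x y : ℕ) (hF : 0 < F) (h1 : N * x = n * (F * s))
    (h2 : N * D * y = n * r * (F * P)) (h3 : x ≤ F * k + y) :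
    D * n * s ≤ k * N * D + n * r * P := by
  have h := Nat.mul_le_mul_left (N * D) h3
  apply Nat.le_of_mul_le_mul_left _ hF
  calc F * (D * n * s) = D * (n * (F * s)) := by ring
    _ = N * D * x := by rw [← h1]; ring
    _ ≤ _ := h
    _ = N * D * (F * k) + N * D * y := by ring
    _ = _ := by rw [h2]; ring

open Finset Pointwise in
lemma kneser_supersat (n k : ℕ) (hk : 1 ≤ k) (hn : 2 * k ≤ n) (S : Finset (Finset (Fin n)))
    (hS : S ⊆ powersetCard k univ) :
    (n - k).choose k * n * #S ≤ k * n.choose k * (n - k).choose k +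
      n * (n - 2 * k + 1) * #((S ×ˢ S).filter (fun p => Disjoint p.1 p.2)) := by
  have : NeZero n := ⟨by omega⟩
  set O1 := powersetCard k (univ : Finset (Fin n)) with hO1
  set O2 := (O1 ×ˢ O1).filter (fun p => Disjoint p.1 p.2) with hO2
  set P := (S ×ˢ S).filter (fun p => Disjoint p.1 p.2) with hP
  have cO1 : #O1 = n.choose k := by simp [hO1]
  have cO2 : #O2 = n.choose k * (n - k).choose k := card_disj_pairs n k
  have arcO1 : ∀ i, cycArc n k i ∈ O1 := fun i => by
    simp [hO1, mem_powersetCard, cycArc_card n k (by omega) i]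
  have smulO1 : ∀ (g : Equiv.Perm (Fin n)), ∀ a ∈ O1, g • a ∈ O1 := by
    intro g a ha
    simp only [hO1, mem_powersetCard, subset_univ, true_and] at ha ⊢
    rw [card_smul_finset, ha]
  have h1 : ∀ i : Fin n, #O1 * #{g : Equiv.Perm (Fin n) | g • cycArc n k i ∈ S}
      = Fintype.card (Equiv.Perm (Fin n)) * #S := by
    intro i
    refine avg_action O1 S hS smulO1 ?_ _ (arcO1 i)
    intro a ha b hb
    simp only [hO1, mem_powersetCard, subset_univ, true_and] at ha hb
    obtain ⟨σ, h, -⟩ := perm_trans a ∅ b ∅ (by omega) rfl (by simp) (by simp)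
    exact ⟨σ, h⟩
  have h2 : ∀ i : Fin n, ∀ d ∈ Icc k (n - k), #O2 * #{g : Equiv.Perm (Fin n) |
        g • cycArc n k i ∈ S ∧ g • cycArc n k (i + Fin.ofNat n d) ∈ S}
      = Fintype.card (Equiv.Perm (Fin n)) * #P := by
    intro i d hd
    rw [mem_Icc] at hd
    have hdis := cycArc_disjoint n k d hd.1 (by omega) i
    rw [← avg_action (G := Equiv.Perm (Fin n)) O2 P ?_ ?_ ?_
      (cycArc n k i, cycArc n k (i + Fin.ofNat n d)) ?_]
    · congr 2
      ext g
      simp only [mem_filter, mem_univ, true_and, hP, Prod.smul_mk, mem_product]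
      refine ⟨fun h => ⟨h, ?_⟩, fun h => h.1⟩
      exact smul_disj g _ _ hdis
    · exact filter_subset_filter _ (product_subset_product hS hS)
    · rintro g ⟨a, b⟩ hab
      simp only [hO2, mem_filter, mem_product, Prod.smul_mk] at hab ⊢
      refine ⟨⟨smulO1 g _ hab.1.1, smulO1 g _ hab.1.2⟩, ?_⟩
      exact smul_disj g _ _ hab.2
    · rintro ⟨a, b⟩ hab ⟨a', b'⟩ hab'
      simp only [hO2, hO1, mem_filter, mem_product, mem_powersetCard, subset_univ, true_and]
        at hab hab'
      obtain ⟨σ, h, h'⟩ := perm_trans a b a' b' (by omega) (by omega) hab.2 hab'.2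
      exact ⟨σ, by rw [Prod.smul_mk, h, h']⟩
    · exact mem_filter.2 ⟨mem_product.2 ⟨arcO1 _, arcO1 _⟩, hdis⟩
  have key : ∀ g : Equiv.Perm (Fin n), #{i : Fin n | g • cycArc n k i ∈ S} ≤
      k + #((univ ×ˢ Icc k (n - k) : Finset (Fin n × ℕ)).filter
      (fun p => g • cycArc n k p.1 ∈ S ∧ g • cycArc n k (p.1 + Fin.ofNat n p.2) ∈ S)) := by
    intro g
    simpa using circle_supersat n k hk hn {i : Fin n | g • cycArc n k i ∈ S}
  have sumkey := sum_le_sum (s := univ) (fun g _ => key g)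
  rw [sum_add_distrib] at sumkey
  have s1 : ∑ g : Equiv.Perm (Fin n), #{i : Fin n | g • cycArc n k i ∈ S}
      = ∑ i : Fin n, #{g : Equiv.Perm (Fin n) | g • cycArc n k i ∈ S} := by
    simp only [card_filter]
    exact sum_comm
  have s2 : ∑ g : Equiv.Perm (Fin n), #((univ ×ˢ Icc k (n - k) : Finset (Fin n × ℕ)).filter
      (fun p => g • cycArc n k p.1 ∈ S ∧ g • cycArc n k (p.1 + Fin.ofNat n p.2) ∈ S))
      = ∑ p ∈ (univ ×ˢ Icc k (n - k) : Finset (Fin n × ℕ)), #{g : Equiv.Perm (Fin n) |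
        g • cycArc n k p.1 ∈ S ∧ g • cycArc n k (p.1 + Fin.ofNat n p.2) ∈ S} := by
    simp only [card_filter]
    exact sum_comm
  rw [s1, s2] at sumkey
  have t1 : #O1 * ∑ i : Fin n, #{g : Equiv.Perm (Fin n) | g • cycArc n k i ∈ S}
      = n * (Fintype.card (Equiv.Perm (Fin n)) * #S) := by
    rw [mul_sum, sum_congr rfl (fun i _ => h1 i)]
    simp
  have t2 : #O2 * ∑ p ∈ (univ ×ˢ Icc k (n - k) : Finset (Fin n × ℕ)),
      #{g : Equiv.Perm (Fin n) |
        g • cycArc n k p.1 ∈ S ∧ g • cycArc n k (p.1 + Fin.ofNat n p.2) ∈ S}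
      = n * (n - 2 * k + 1) * (Fintype.card (Equiv.Perm (Fin n)) * #P) := by
    rw [mul_sum, sum_congr rfl (fun p hp => h2 p.1 p.2 (mem_product.1 hp).2)]
    rw [sum_const, card_product, card_univ, Fintype.card_fin, Nat.card_Icc, smul_eq_mul]
    congr 2
    omega
  have hG : 0 < Fintype.card (Equiv.Perm (Fin n)) := Fintype.card_pos
  simp only [sum_const, card_univ, smul_eq_mul] at sumkey
  rw [cO1] at t1
  rw [cO2] at t2
  exact nat_aux _ _ _ _ _ _ _ _ _ _ hG t1 t2 sumkey

lemma le_choose_one (a : ℕ) : ∀ b, 1 ≤ b → b + 1 ≤ a → a ≤ a.choose b := by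
  induction a with
  | zero => intro b _ h; omega
  | succ a ih =>
    intro b h1 h2
    obtain ⟨c, rfl⟩ : ∃ c, b = c + 1 := ⟨b - 1, by omega⟩
    rw [Nat.choose_succ_succ']
    rcases Nat.lt_or_ge (c + 1) a with h | h
    · have := ih (c + 1) h1 (by omega)
      have : 0 < a.choose c := Nat.choose_pos (by omega)
      omega
    · have e : a = c + 1 := by omega
      subst e
      simp [Nat.choose_succ_self_right]

lemma choose_two_le (a : ℕ) : ∀ b, 2 ≤ b → b + 2 ≤ a → a.choose 2 ≤ a.choose b := by
  induction a with
  | zero => intro b _ h; omega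
  | succ a ih =>
    intro b h1 h2
    obtain ⟨c, rfl⟩ : ∃ c, b = c + 1 := ⟨b - 1, by omega⟩
    rw [Nat.choose_succ_succ' a c, show (a + 1).choose 2 = a.choose 1 + a.choose 2 from rfl,
      Nat.choose_one_right]
    rcases Nat.lt_or_ge (c + 2) a with h | h
    · have := ih (c + 1) h1 (by omega)
      have := le_choose_one a c (by omega) (by omega)
      omega
    · have e : a = c + 2 := by omega
      subst e
      have h3 : (c + 2).choose (c + 1) = c + 2 := Nat.choose_succ_self_right (c + 1)
      have h4 : (c + 2).choose c = (c + 2).choose 2 := by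
        have := Nat.choose_symm_add (a := c) (b := 2)
        exact this
      omega

open Finset in
/-- cleaned-up supersaturation: `C n |S| ≤ k N C + n k P` with `C = C(n-k,k-1)` -/
lemma kneser_supersat' (n k : ℕ) (hk : 1 ≤ k) (hn : 2 * k ≤ n) (S : Finset (Finset (Fin n)))
    (hS : S ⊆ powersetCard k univ) :
    (n - k).choose (k - 1) * n * #S ≤ k * n.choose k * (n - k).choose (k - 1) +
      n * k * #((S ×ˢ S).filter (fun p => Disjoint p.1 p.2)) := by
  have h := Nat.mul_le_mul_left k (kneser_supersat n k hk hn S hS)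
  have e := Nat.choose_succ_right_eq (n - k) (k - 1)
  rw [Nat.sub_add_cancel hk, show n - k - (k - 1) = n - 2 * k + 1 by omega] at e
  apply Nat.le_of_mul_le_mul_left _ (show 0 < n - 2 * k + 1 by omega)
  set C := (n - k).choose (k - 1)
  set D := (n - k).choose k
  set r := n - 2 * k + 1
  set P := #((S ×ˢ S).filter (fun p => Disjoint p.1 p.2))
  calc _ = (C * r) * n * #S := by ring
    _ = k * (D * n * #S) := by rw [← e]; ring
    _ ≤ _ := h
    _ = k * n.choose k * (D * k) + r * (n * k * P) := by ring
    _ = _ := by rw [e]; ring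

open Finset in
lemma numIntersecting_eq (n k : ℕ) (hk : 1 ≤ k) : numIntersecting n k =
    #((powersetCard k (univ : Finset (Fin n))).powerset.filter
      (fun T => ∀ x ∈ T, ∀ y ∈ T, ¬ Disjoint x y)) := by
  classical
  rw [numIntersecting, Nat.card_eq_fintype_card, Fintype.card_subtype]
  congr 1
  ext H
  rw [mem_filter, mem_filter, mem_powerset, subset_iff]
  simp only [mem_univ, true_and, IsKUniform, IsIntersectingHyp,
    mem_powersetCard, subset_univ, not_disjoint_iff_nonempty_inter]

open Finset in
lemma lower_bound (n k : ℕ) (hk : 3 ≤ k) (hn : 2 * k + 1 ≤ n) :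
    ((n - 1).choose (k - 1) : ℝ) ≤ Real.logb 2 (numIntersecting n k) := by
  have : NeZero n := ⟨by omega⟩
  have h : 2 ^ ((n - 1).choose (k - 1)) ≤ numIntersecting n k := by
    rw [numIntersecting_eq n k (by omega)]
    have e : #(((univ : Finset (Fin n)).erase 0).powersetCard (k-1)) = (n - 1).choose (k - 1) := by
      rw [card_powersetCard, card_erase_of_mem (mem_univ _), card_univ, Fintype.card_fin]
    set Q := ((univ : Finset (Fin n)).erase 0).powersetCard (k-1) with hQ
    have h0 : ∀ A ∈ Q, (0 : Fin n) ∉ A := fun A hA h =>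
      absurd ((mem_powersetCard.1 hA).1 h) (by simp)
    have e2 : #(Q.image (insert 0)) = #Q := by
      apply card_image_of_injOn
      intro A hA B hB h
      rw [← erase_insert (h0 A hA), ← erase_insert (h0 B hB), h]
    rw [← e, ← e2, ← card_powerset]
    apply card_le_card
    intro T hT
    rw [mem_powerset] at hT
    have hT0 : ∀ x ∈ T, (0 : Fin n) ∈ x := fun x hx => by
      obtain ⟨A, -, rfl⟩ := mem_image.1 (hT hx)
      simp
    rw [mem_filter, mem_powerset]
    refine ⟨fun x hx => ?_, fun x hx y hy hd => disjoint_left.1 hd (hT0 x hx) (hT0 y hy)⟩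
    obtain ⟨A, hA, rfl⟩ := mem_image.1 (hT hx)
    rw [mem_powersetCard, card_insert_of_notMem (h0 A hA), (mem_powersetCard.1 hA).2]
    exact ⟨subset_univ _, by omega⟩
  rw [Real.le_logb_iff_rpow_le (by norm_num) (by
    have : 0 < numIntersecting n k := lt_of_lt_of_le (by positivity) h
    exact_mod_cast this), Real.rpow_natCast]
  exact_mod_cast h

open Finset in
lemma upper_bound (δ : ℝ) (h0 : 0 < δ) (h1 : δ ≤ 1) (n k : ℕ) (hk : 3 ≤ k) (hn : 2 * k + 1 ≤ n)
    (hbig : 8192 / δ ^ 5 ≤ n) :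
    Real.logb 2 (numIntersecting n k) ≤ (1 + 3 * δ) * ((n - 1).choose (k - 1) : ℝ) := by
  set B : ℝ := ((n - 1).choose (k - 1) : ℝ) with hB
  have hn0 : (0:ℝ) < n := by exact_mod_cast (show 0 < n by omega)
  have hkn : (2:ℝ) * k + 1 ≤ n := by exact_mod_cast hn
  have hk3 : (3:ℝ) ≤ k := by exact_mod_cast hk
  have hB0 : 0 < B := by
    have : 0 < (n - 1).choose (k - 1) := Nat.choose_pos (by omega)
    rw [hB]
    exact_mod_cast this
  have hBN : (k:ℝ) * n.choose k = n * B := by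
    have := Nat.add_one_mul_choose_eq (n - 1) (k - 1)
    rw [Nat.sub_add_cancel (by omega), Nat.sub_add_cancel (by omega)] at this
    rw [hB, mul_comm]
    exact_mod_cast this.symm
  set C : ℝ := ((n - k).choose (k - 1) : ℝ) with hC
  have hCn : (n:ℝ) ^ 2 / 16 ≤ C := by
    have c1 := choose_two_le (n - k) (k - 1) (by omega) (by omega)
    have c1' : (((n - k).choose 2 : ℕ) : ℝ) ≤ C := by rw [hC]; exact_mod_cast c1
    rw [Nat.cast_choose_two, Nat.cast_sub (by omega)] at c1'
    have : (7:ℝ) ≤ n := by linarith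
    nlinarith
  set η : ℝ := δ * k / n with hη
  have hη0 : 0 < η := by positivity
  have hη1 : η ≤ 1 := by
    rw [hη, div_le_one hn0]; nlinarith
  have main := container_count (fun x y : Finset (Fin n) => Disjoint x y) (1 + η) ((1 + δ) * B)
    (by linarith) (powersetCard k univ) (by
      intro S hS hM
      have hss := kneser_supersat' n k (by omega) (by omega) S hS
      have hss' : C * n * #S ≤ k * n.choose k * C +
          n * k * (#((S ×ˢ S).filter (fun p => Disjoint p.1 p.2)) : ℝ) := by
        rw [hC]
        exact_mod_cast hss
      have hP : #((S ×ˢ S).filter (fun p => Disjoint p.1 p.2)) =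
          ∑ v ∈ S, #(S.filter (fun u => Disjoint v u)) := by
        rw [card_filter, sum_product]
        exact sum_congr rfl fun v _ => (card_filter _ _).symm
      have hCpos : 0 < C := lt_of_lt_of_le (by positivity) hCn
      have hex : ∃ v ∈ S, C * δ / (2 * k) ≤ (#(S.filter (fun u => Disjoint v u)) : ℝ) := by
        by_contra! hcon
        have hle : (#((S ×ˢ S).filter (fun p => Disjoint p.1 p.2)) : ℝ) ≤
            #S * (C * δ / (2 * k)) := by
          rw [hP, Nat.cast_sum, ← nsmul_eq_mul]
          exact sum_le_card_nsmul _ _ _ (fun v hv => (hcon v hv).le)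
        rw [hBN] at hss'
        have e : (n:ℝ) * k * (#S * (C * δ / (2 * k))) = n * C * (#S * δ / 2) := by
          field_simp
        have h3 : (n:ℝ) * k * (#((S ×ˢ S).filter (fun p => Disjoint p.1 p.2)) : ℝ)
            ≤ n * C * (#S * δ / 2) := by
          rw [← e]; exact mul_le_mul_of_nonneg_left hle (by positivity)
        have h4 : (n * C) * (#S : ℝ) ≤ (n * C) * (B + #S * δ / 2) := by linarith
        have h5 := le_of_mul_le_mul_left h4 (by positivity)
        have h6 : (1 + δ) * B * (1 - δ / 2) < #S * (1 - δ / 2) :=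
          mul_lt_mul_of_pos_right hM (by linarith)
        have h7 : 0 ≤ δ * (1 - δ) * B := mul_nonneg (mul_nonneg h0.le (by linarith)) hB0.le
        nlinarith
      obtain ⟨v, hv, hdeg⟩ := hex
      refine ⟨v, hv, ?_, ?_⟩
      · have := (mem_powersetCard.1 (hS hv)).2
        rw [disjoint_self]
        rintro rfl
        simp at this
        omega
      set d := #(S.filter (fun u => Disjoint v u))
      have hηd : δ ^ 2 * n / 32 ≤ η * d := by
        calc δ ^ 2 * n / 32 = δ ^ 2 / (2 * n) * (n ^ 2 / 16) := by field_simp; norm_num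
          _ ≤ δ ^ 2 / (2 * n) * C := by gcongr
          _ = η * (C * δ / (2 * k)) := by rw [hη]; field_simp
          _ ≤ _ := by gcongr
      have hexp : Real.exp (η / 2) ≤ 1 + η := by
        have := Real.exp_bound_div_one_sub_of_interval (x := η / 2) (by positivity) (by linarith)
        refine this.trans ?_
        rw [div_le_iff₀ (by linarith)]
        nlinarith
      have hpow : Real.exp (η * d / 2) ≤ (1 + η) ^ d := by
        rw [show η * d / 2 = d * (η / 2) by ring, Real.exp_nat_mul]
        exact pow_le_pow_left₀ (Real.exp_pos _).le hexp d
      have hq := Real.quadratic_le_exp_of_nonneg (x := η * d / 2) (by positivity)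
      have hsq : (δ ^ 2 * n / 32 / 2) ^ 2 / 2 ≤ (1 + η) ^ d := by
        have a1 : (δ ^ 2 * n / 32 / 2) ^ 2 ≤ (η * d / 2) ^ 2 := by gcongr
        have a2 : 0 ≤ η * d / 2 := by positivity
        linarith
      have hηn : δ / n ≤ η := by
        rw [hη]; gcongr; nlinarith
      rw [div_le_iff₀ (by positivity)] at hbig
      have e1 : δ / n * ((δ ^ 2 * n / 32 / 2) ^ 2 / 2) = n * δ ^ 5 / 8192 := by
        field_simp; norm_num
      calc (1:ℝ) ≤ n * δ ^ 5 / 8192 := by linarith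
        _ = _ := e1.symm
        _ ≤ η * (1 + η) ^ d := by gcongr
        _ = _ := by ring) (n.choose k) (powersetCard k univ) (Subset.refl _) (by simp)
  have hnum := numIntersecting_eq n k (by omega)
  have main : (numIntersecting n k : ℝ) ≤ (2:ℝ) ^ ((1 + δ) * B) * (1 + η) ^ (n.choose k) := by
    rw [hnum]
    convert main
  have hpos : (0:ℝ) < numIntersecting n k := by
    have : 0 < numIntersecting n k := by
      rw [numIntersecting_eq n k (by omega)]
      exact card_pos.2 ⟨∅, by simp⟩
    exact_mod_cast this
  have hlog := Real.logb_le_logb_of_le (b := 2) (by norm_num) hpos main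
  rw [Real.logb_mul (by positivity) (by positivity), Real.logb_rpow (by norm_num) (by norm_num),
    Real.logb_pow] at hlog
  have hl : Real.logb 2 (1 + η) ≤ 2 * η := by
    rw [Real.logb, div_le_iff₀ (Real.log_pos (by norm_num))]
    have a := Real.log_le_sub_one_of_pos (x := 1 + η) (by positivity)
    have b := Real.log_two_gt_d9
    nlinarith
  have hNη : (n.choose k : ℝ) * (2 * η) = 2 * δ * B := by
    rw [hη]; field_simp; linarith
  have : (n.choose k : ℝ) * Real.logb 2 (1 + η) ≤ 2 * δ * B := by
    rw [← hNη]; gcongr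
  linarith

theorem log_number_of_intersecting_hypergraphs :
    (∀ n k : ℕ, 3 ≤ k → 2 * k + 1 ≤ n →
      ((n - 1).choose (k - 1) : ℝ) ≤ Real.logb 2 (numIntersecting n k)) ∧
    (∀ ε : ℝ, 0 < ε → ∃ n₀ : ℕ, ∀ n : ℕ, n₀ ≤ n → ∀ k : ℕ, 3 ≤ k → 2 * k ≤ n - 1 →
      Real.logb 2 (numIntersecting n k) ≤ (1 + ε) * ((n - 1).choose (k - 1) : ℝ)) := by
  refine ⟨lower_bound, fun ε hε => ?_⟩
  have hδ : 0 < min (ε / 3) 1 := by positivity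
  refine ⟨⌈8192 / (min (ε / 3) 1) ^ 5⌉₊, fun n hn k hk hkn => ?_⟩
  refine (upper_bound _ hδ (min_le_right _ _) n k hk (by omega) (Nat.ceil_le.1 hn)).trans ?_
  have := min_le_left (ε / 3) 1
  gcongr
  linarith
end
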